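/- Let n > r ≥ 0 be integers. Suppose that for every pair of groups (Γ₀, Γ₁) we are given a ℂ-linear map φ_{Γ₀,Γ₁} : H^n(Γ₀ × Γ₁; ℂ) → H^r(Γ₀ × Γ₁; ℂ) between group cohomology groups with trivial ℂ coefficients, and that this family is natural: for all group homomorphisms f₀ : Γ₀ → Γ₀' and f₁ : Γ₁ → Γ₁', the restriction maps (f₀ × f₁)^* in both degrees intertwine φ_{Γ₀',Γ₁'} and φ_{Γ₀,Γ₁}. Then φ_{Γ₀,Γ₁} = 0 for every pair (Γ₀, Γ₁). -/

import Mathlib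

/-! Group cohomology with trivial ℂ coefficients, via inhomogeneous cochains. -/

/-- The differential on inhomogeneous cochains (trivial ℂ coefficients):
`(dφ)(g₁,…,g_{n+1}) = φ(g₂,…,g_{n+1}) + Σ_{j=1}^{n} (−1)^j φ(g₁,…,g_j g_{j+1},…,g_{n+1})
+ (−1)^{n+1} φ(g₁,…,gₙ)`. -/
noncomputable def gcD (G : Type) [Group G] (n : ℕ) :
    ((Fin n → G) → ℂ) →ₗ[ℂ] ((Fin (n + 1) → G) → ℂ) where
  toFun φ := fun v =>
    φ (fun i => v i.succ)
      + ∑ j ∈ Finset.range n, (-1 : ℂ) ^ (j + 1) *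
          φ (fun i : Fin n =>
            if i.val < j then v i.castSucc
            else if i.val = j then
              v ⟨j % (n + 1), Nat.mod_lt j (Nat.succ_pos n)⟩ *
                v ⟨(j + 1) % (n + 1), Nat.mod_lt (j + 1) (Nat.succ_pos n)⟩
            else v i.succ)
      + (-1 : ℂ) ^ (n + 1) * φ (fun i => v i.castSucc)
  map_add' φ ψ := by
    funext v
    simp only [Pi.add_apply, mul_add, Finset.sum_add_distrib]
    ring
  map_smul' c φ := by
    funext v
    simp only [Pi.smul_apply, smul_eq_mul, RingHom.id_apply, mul_add, Finset.mul_sum]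
    congr 1
    congr 1
    · exact Finset.sum_congr rfl (fun x _ => by ring)
    · ring

/-- The `n`-cocycles. -/
noncomputable def gcZ (G : Type) [Group G] (n : ℕ) : Submodule ℂ ((Fin n → G) → ℂ) :=
  LinearMap.ker (gcD G n)

/-- The `n`-coboundaries (`⊥` in degree 0). -/
noncomputable def gcB (G : Type) [Group G] : (n : ℕ) → Submodule ℂ ((Fin n → G) → ℂ)
  | 0 => ⊥
  | (k + 1) => LinearMap.range (gcD G k)

/-- The group cohomology `H^n(G; ℂ)` with trivial coefficients. -/
noncomputable abbrev gcH (G : Type) [Group G] (n : ℕ) :=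
  gcZ G n ⧸ (gcB G n).comap (gcZ G n).subtype

/-- Pullback of cochains along a group homomorphism. -/
noncomputable def gcRes {G G' : Type} [Group G] [Group G'] (f : G →* G') (n : ℕ) :
    ((Fin n → G') → ℂ) →ₗ[ℂ] ((Fin n → G) → ℂ) where
  toFun φ := fun v => φ (fun i => f (v i))
  map_add' _ _ := rfl
  map_smul' _ _ := rfl

lemma gcRes_comm {G G' : Type} [Group G] [Group G'] (f : G →* G') (n : ℕ) :
    (gcD G n).comp (gcRes f n) = (gcRes f (n + 1)).comp (gcD G' n) := by
  apply LinearMap.ext; intro φ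
  funext v
  simp only [LinearMap.comp_apply, gcD, gcRes, LinearMap.coe_mk, AddHom.coe_mk]
  congr 2
  · apply Finset.sum_congr rfl
    intro j _
    congr 1
    congr 1
    funext i
    split_ifs <;> simp [map_mul]

lemma gcRes_mem_ker {G G' : Type} [Group G] [Group G'] (f : G →* G') (n : ℕ)
    {φ : (Fin n → G') → ℂ} (hφ : φ ∈ gcZ G' n) : gcRes f n φ ∈ gcZ G n := by
  have h := LinearMap.congr_fun (gcRes_comm f n) φ
  simp only [LinearMap.comp_apply] at h
  simp only [gcZ, LinearMap.mem_ker] at hφ ⊢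
  rw [h, hφ, map_zero]

lemma gcRes_mem_b {G G' : Type} [Group G] [Group G'] (f : G →* G') (n : ℕ)
    {φ : (Fin n → G') → ℂ} (hφ : φ ∈ gcB G' n) : gcRes f n φ ∈ gcB G n := by
  cases n with
  | zero =>
    simp only [gcB, Submodule.mem_bot] at hφ ⊢
    rw [hφ]; exact map_zero _
  | succ k =>
    obtain ⟨ψ, hψ⟩ := hφ
    refine ⟨gcRes f k ψ, ?_⟩
    have h := LinearMap.congr_fun (gcRes_comm f k) ψ
    simp only [LinearMap.comp_apply] at h
    rw [h, hψ]

/-- The pullback (restriction) map on group cohomology `H^n(G';ℂ) → H^n(G;ℂ)`. -/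
noncomputable def gcHmap {G G' : Type} [Group G] [Group G'] (f : G →* G') (n : ℕ) :
    gcH G' n →ₗ[ℂ] gcH G n :=
  Submodule.liftQ _
    (((gcB G n).comap (gcZ G n).subtype).mkQ.comp
      ((gcRes f n).restrict (fun φ hφ => gcRes_mem_ker f n hφ)))
    (by
      intro x hx
      simp only [LinearMap.mem_ker, LinearMap.comp_apply, Submodule.mkQ_apply,
        Submodule.Quotient.mk_eq_zero, Submodule.mem_comap]
      exact gcRes_mem_b f n hx)


namespace KT

/-- Representations, as plain homomorphisms. -/
abbrev Rp (G M : Type) [Group G] [AddCommGroup M] [Module ℂ M] := G →* Module.End ℂ M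

section basic

variable {G M : Type} [Group G] [AddCommGroup M] [Module ℂ M]

/-- The homogeneous differential. -/
def dd {X M : Type} [AddCommGroup M] [Module ℂ M] (n : ℕ) :
    ((Fin n → X) → M) →ₗ[ℂ] ((Fin (n + 1) → X) → M) where
  toFun c := fun x => ∑ i : Fin (n + 1), (-1 : ℤ) ^ (i : ℕ) • c (fun j => x (i.succAbove j))
  map_add' c c' := by
    funext x; simp [Finset.sum_add_distrib]
  map_smul' r c := by
    funext x
    simp only [Pi.smul_apply, RingHom.id_apply, Finset.smul_sum]
    refine Finset.sum_congr rfl fun i _ => ?_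
    rw [smul_comm]

theorem dd_apply {X M : Type} [AddCommGroup M] [Module ℂ M] (n : ℕ) (c : (Fin n → X) → M)
    (x : Fin (n + 1) → X) :
    dd n c x = ∑ i : Fin (n + 1), (-1 : ℤ) ^ (i : ℕ) • c (fun j => x (i.succAbove j)) := rfl

theorem dd_cons {X M : Type} [AddCommGroup M] [Module ℂ M] (n : ℕ) (c : (Fin (n + 1) → X) → M)
    (a : X) (x : Fin (n + 1) → X) :
    dd (n + 1) c (Fin.cons a x) = c x - dd n (fun y => c (Fin.cons a y)) x := by
  rw [dd_apply, Fin.sum_univ_succ, dd_apply, sub_eq_add_neg, ← Finset.sum_neg_distrib]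
  congr 1
  · simp
  · refine Finset.sum_congr rfl fun i _ => ?_
    rw [Fin.val_succ, pow_succ, mul_neg_one, neg_smul]
    congr 3
    funext j
    refine Fin.cases ?_ (fun j => ?_) j
    · simp
    · simp

theorem dd_dd {X M : Type} [AddCommGroup M] [Module ℂ M] (n : ℕ) :
    ∀ (c : (Fin n → X) → M), dd (n + 1) (dd n c) = 0 := by
  induction n with
  | zero =>
    intro c
    funext x
    rw [← Fin.cons_self_tail x, dd_cons]
    simp [dd_apply]
  | succ n ih =>
    intro c
    funext x
    rw [← Fin.cons_self_tail x, dd_cons]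
    have : (fun y => dd (n + 1) c (Fin.cons (x 0) y))
        = c - dd n (fun y => c (Fin.cons (x 0) y)) := by
      funext y; rw [dd_cons]; rfl
    rw [this, map_sub, ih]
    simp

theorem dd_comp_lin {X M N : Type} [AddCommGroup M] [Module ℂ M] [AddCommGroup N] [Module ℂ N]
    (n : ℕ) (φ : M →ₗ[ℂ] N) (c : (Fin n → X) → M) :
    dd n (fun x => φ (c x)) = fun x => φ (dd n c x) := by
  funext x; simp [dd_apply, map_sum]

theorem dd_comp_map {X Y M : Type} [AddCommGroup M] [Module ℂ M]
    (n : ℕ) (f : X → Y) (c : (Fin n → Y) → M) :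
    dd n (fun x => c (fun i => f (x i))) = fun x => dd n c (fun i => f (x i)) := rfl

/-- Equivariant cochains. -/
def Coch (ρ : Rp G M) (n : ℕ) : Submodule ℂ ((Fin (n + 1) → G) → M) where
  carrier := {c | ∀ g x, c (fun i => g * x i) = ρ g (c x)}
  zero_mem' := by intro g x; simp
  add_mem' := by
    intro a b ha hb g x
    simp only [Pi.add_apply, map_add, ha g x, hb g x]
  smul_mem' := by
    intro r a ha g x
    simp only [Pi.smul_apply, map_smul, ha g x]

theorem dd_mem (ρ : Rp G M) (n : ℕ) {c} (hc : c ∈ Coch ρ n) : dd (n + 1) c ∈ Coch ρ (n + 1) := by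
  intro g x
  rw [dd_apply, dd_apply, map_sum]
  refine Finset.sum_congr rfl fun i _ => ?_
  rw [map_zsmul, ← hc g]

def Z (ρ : Rp G M) (n : ℕ) : Submodule ℂ ((Fin (n + 1) → G) → M) :=
  Coch ρ n ⊓ LinearMap.ker (dd (n + 1))

def B (ρ : Rp G M) : (n : ℕ) → Submodule ℂ ((Fin (n + 1) → G) → M)
  | 0 => ⊥
  | (n + 1) => (Coch ρ n).map (dd (n + 1))

abbrev H (ρ : Rp G M) (n : ℕ) := Z ρ n ⧸ (B ρ n).comap (Z ρ n).subtype

def mk (ρ : Rp G M) (n : ℕ) (c : (Fin (n + 1) → G) → M) (hc : c ∈ Z ρ n) : H ρ n :=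
  Submodule.Quotient.mk ⟨c, hc⟩

theorem mk_surj (ρ : Rp G M) (n : ℕ) (y : H ρ n) : ∃ c hc, y = mk ρ n c hc := by
  obtain ⟨⟨c, hc⟩, rfl⟩ := Submodule.Quotient.mk_surjective _ y
  exact ⟨c, hc, rfl⟩

theorem mk_eq_zero (ρ : Rp G M) (n : ℕ) (c hc) : mk ρ n c hc = 0 ↔ c ∈ B ρ n := by
  unfold mk
  rw [Submodule.Quotient.mk_eq_zero]; rfl

theorem mk_add (ρ : Rp G M) (n : ℕ) (c hc c' hc') :
    mk ρ n c hc + mk ρ n c' hc' = mk ρ n (c + c') (Submodule.add_mem _ hc hc') := rfl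

theorem mk_sub (ρ : Rp G M) (n : ℕ) (c hc c' hc') :
    mk ρ n c hc - mk ρ n c' hc' = mk ρ n (c - c') (Submodule.sub_mem _ hc hc') := rfl

theorem mk_eq (ρ : Rp G M) (n : ℕ) (c hc c' hc') :
    mk ρ n c hc = mk ρ n c' hc' ↔ c - c' ∈ B ρ n := by
  rw [← sub_eq_zero, mk_sub, mk_eq_zero]

theorem mk_congr (ρ : Rp G M) (n : ℕ) {c c'} (hc hc') (h : c = c') :
    mk ρ n c hc = mk ρ n c' hc' := by subst h; rfl

theorem mem_Z {ρ : Rp G M} {n : ℕ} {c} : c ∈ Z ρ n ↔ c ∈ Coch ρ n ∧ dd (n + 1) c = 0 := by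
  simp [Z]

theorem mem_B_succ {ρ : Rp G M} {n : ℕ} {c} :
    c ∈ B ρ (n + 1) ↔ ∃ b ∈ Coch ρ n, dd (n + 1) b = c := by
  simp [B]

theorem mem_B_zero {ρ : Rp G M} {c} : c ∈ B ρ 0 ↔ c = 0 := by
  simp [B]

end basic

/-- Compatible pairs. -/
def IsMor {G G' M M' : Type} [Group G] [Group G'] [AddCommGroup M] [Module ℂ M]
    [AddCommGroup M'] [Module ℂ M'] (ρ' : Rp G' M') (ρ : Rp G M) (f : G →* G')
    (φ : M' →ₗ[ℂ] M) : Prop := ∀ g m, φ (ρ' (f g) m) = ρ g (φ m)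

section hmap

variable {G G' G'' M M' M'' : Type} [Group G] [Group G'] [Group G'']
  [AddCommGroup M] [Module ℂ M] [AddCommGroup M'] [Module ℂ M'] [AddCommGroup M''] [Module ℂ M'']
  {ρ : Rp G M} {ρ' : Rp G' M'} {ρ'' : Rp G'' M''}

theorem IsMor.comp {f : G →* G'} {φ : M' →ₗ[ℂ] M} {f' : G' →* G''} {φ' : M'' →ₗ[ℂ] M'}
    (h : IsMor ρ' ρ f φ) (h' : IsMor ρ'' ρ' f' φ') : IsMor ρ'' ρ (f'.comp f) (φ.comp φ') := by
  intro g m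
  simp only [MonoidHom.comp_apply, LinearMap.comp_apply]
  rw [h', h]

def cmap (n : ℕ) (f : G →* G') (φ : M' →ₗ[ℂ] M) :
    ((Fin n → G') → M') →ₗ[ℂ] ((Fin n → G) → M) where
  toFun c := fun x => φ (c (fun i => f (x i)))
  map_add' _ _ := by funext x; simp
  map_smul' _ _ := by funext x; simp

theorem dd_cmap (n : ℕ) (f : G →* G') (φ : M' →ₗ[ℂ] M) (c) :
    dd n (cmap n f φ c) = cmap (n + 1) f φ (dd n c) := by
  funext x; simp [dd_apply, map_sum, cmap]

theorem cmap_Coch {f : G →* G'} {φ : M' →ₗ[ℂ] M} (h : IsMor ρ' ρ f φ) (n : ℕ) {c}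
    (hc : c ∈ Coch ρ' n) : cmap (n + 1) f φ c ∈ Coch ρ n := by
  intro g x
  simp only [cmap, LinearMap.coe_mk, AddHom.coe_mk, map_mul]
  rw [hc, h]

theorem cmap_Z {f : G →* G'} {φ : M' →ₗ[ℂ] M} (h : IsMor ρ' ρ f φ) (n : ℕ) {c}
    (hc : c ∈ Z ρ' n) : cmap (n + 1) f φ c ∈ Z ρ n := by
  rw [mem_Z] at hc ⊢
  exact ⟨cmap_Coch h n hc.1, by rw [dd_cmap, hc.2, map_zero]⟩

theorem cmap_B {f : G →* G'} {φ : M' →ₗ[ℂ] M} (h : IsMor ρ' ρ f φ) (n : ℕ) {c}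
    (hc : c ∈ B ρ' n) : cmap (n + 1) f φ c ∈ B ρ n := by
  cases n with
  | zero => rw [mem_B_zero] at hc ⊢; rw [hc, map_zero]
  | succ n =>
    rw [mem_B_succ] at hc ⊢
    obtain ⟨b, hb, rfl⟩ := hc
    exact ⟨_, cmap_Coch h n hb, dd_cmap _ _ _ _⟩

def Hmap (n : ℕ) (f : G →* G') (φ : M' →ₗ[ℂ] M) (h : IsMor ρ' ρ f φ) : H ρ' n →ₗ[ℂ] H ρ n :=
  Submodule.liftQ _
    (((B ρ n).comap (Z ρ n).subtype).mkQ.comp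
      ((cmap (n + 1) f φ).restrict (fun _ hc => cmap_Z h n hc)))
    (by
      intro x hx
      simp only [LinearMap.mem_ker, LinearMap.comp_apply, Submodule.mkQ_apply,
        Submodule.Quotient.mk_eq_zero, Submodule.mem_comap]
      exact cmap_B h n hx)

theorem Hmap_mk (n : ℕ) (f : G →* G') (φ : M' →ₗ[ℂ] M) (h : IsMor ρ' ρ f φ) (c hc) :
    Hmap n f φ h (mk ρ' n c hc) = mk ρ n (cmap (n + 1) f φ c) (cmap_Z h n hc) := rfl

theorem Hmap_comp (n : ℕ) {f : G →* G'} {φ : M' →ₗ[ℂ] M} {f' : G' →* G''} {φ' : M'' →ₗ[ℂ] M'}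
    (h : IsMor ρ' ρ f φ) (h' : IsMor ρ'' ρ' f' φ') (y) :
    Hmap n f φ h (Hmap n f' φ' h' y) = Hmap n (f'.comp f) (φ.comp φ') (h.comp h') y := by
  obtain ⟨c, hc, rfl⟩ := mk_surj _ _ y
  rfl

theorem Hmap_congr (n : ℕ) {f f₁ : G →* G'} {φ φ₁ : M' →ₗ[ℂ] M}
    (h : IsMor ρ' ρ f φ) (h₁ : IsMor ρ' ρ f₁ φ₁) (hf : f = f₁) (hφ : φ = φ₁) (y) :
    Hmap n f φ h y = Hmap n f₁ φ₁ h₁ y := by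
  subst hf hφ; rfl

theorem Hmap_id (n : ℕ) (h : IsMor ρ ρ (MonoidHom.id G) LinearMap.id) (y) :
    Hmap n _ _ h y = y := by
  obtain ⟨c, hc, rfl⟩ := mk_surj _ _ y
  rfl

theorem Hmap_id' (n : ℕ) {f : G →* G} {φ : M →ₗ[ℂ] M} (h : IsMor ρ ρ f φ)
    (hf : f = MonoidHom.id G) (hφ : φ = LinearMap.id) (y) :
    Hmap n _ _ h y = y := by
  subst hf hφ; exact Hmap_id _ _ _

theorem Hmap_sub_coef (n : ℕ) {f : G →* G'} {φ φ₁ : M' →ₗ[ℂ] M}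
    (h : IsMor ρ' ρ f φ) (h₁ : IsMor ρ' ρ f φ₁) (h₂ : IsMor ρ' ρ f (φ - φ₁)) (y) :
    Hmap n f (φ - φ₁) h₂ y = Hmap n f φ h y - Hmap n f φ₁ h₁ y := by
  obtain ⟨c, hc, rfl⟩ := mk_surj _ _ y
  rfl

theorem Hmap_add_coef (n : ℕ) {f : G →* G'} {φ φ₁ : M' →ₗ[ℂ] M}
    (h : IsMor ρ' ρ f φ) (h₁ : IsMor ρ' ρ f φ₁) (h₂ : IsMor ρ' ρ f (φ + φ₁)) (y) :
    Hmap n f (φ + φ₁) h₂ y = Hmap n f φ h y + Hmap n f φ₁ h₁ y := by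
  obtain ⟨c, hc, rfl⟩ := mk_surj _ _ y
  rfl

/-- Degree zero: a cocycle is constant. -/
theorem Z_zero_const {c} (hc : c ∈ Z ρ 0) (x y) : c x = c y := by
  have h := congrFun (mem_Z.1 hc).2 (Fin.cons (y 0) x)
  rw [dd_cons] at h
  simp [dd_apply] at h
  rw [sub_eq_zero] at h
  rw [h]; congr 1
  funext i; refine Fin.cases ?_ (fun j => j.elim0) i; rfl

theorem Z_zero_inv {c} (hc : c ∈ Z ρ 0) (g x) : ρ g (c x) = c x := by
  rw [← (mem_Z.1 hc).1 g x]; exact Z_zero_const hc _ _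

theorem Hmap_zero_eq {f f₁ : G →* G'} {φ : M' →ₗ[ℂ] M}
    (h : IsMor ρ' ρ f φ) (h₁ : IsMor ρ' ρ f₁ φ) (y) :
    Hmap 0 f φ h y = Hmap 0 f₁ φ h₁ y := by
  obtain ⟨c, hc, rfl⟩ := mk_surj _ _ y
  rw [Hmap_mk, Hmap_mk]
  apply mk_congr
  funext x
  simp only [cmap, LinearMap.coe_mk, AddHom.coe_mk]
  rw [Z_zero_const hc]

end hmap

/-- Short exact sequences of representations. -/
structure SES {G M F Q : Type} [Group G] [AddCommGroup M] [Module ℂ M] [AddCommGroup F] [Module ℂ F]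
    [AddCommGroup Q] [Module ℂ Q] (σM : Rp G M) (σF : Rp G F) (σQ : Rp G Q) where
  ι : M →ₗ[ℂ] F
  π : F →ₗ[ℂ] Q
  hι : IsMor σM σF (MonoidHom.id G) ι
  hπ : IsMor σF σQ (MonoidHom.id G) π
  inj : Function.Injective ι
  surj : Function.Surjective π
  comp : ∀ m, π (ι m) = 0
  exact : ∀ x, π x = 0 → ∃ m, ι m = x

namespace SES

variable {G M F Q : Type} [Group G] [AddCommGroup M] [Module ℂ M] [AddCommGroup F] [Module ℂ F]
    [AddCommGroup Q] [Module ℂ Q] {σM : Rp G M} {σF : Rp G F} {σQ : Rp G Q}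

theorem liftQ (S : SES σM σF σQ) (n : ℕ) {z} (hz : z ∈ Coch σQ n) :
    ∃ b ∈ Coch σF n, (fun x => S.π (b x)) = z := by
  refine ⟨fun x => σF (x 0) (Function.surjInv S.surj (σQ (x 0)⁻¹ (z x))), ?_, ?_⟩
  · intro g x
    simp only [hz g x]
    rw [map_mul, Module.End.mul_apply, mul_inv_rev, map_mul, Module.End.mul_apply,
      ← Module.End.mul_apply (σQ g⁻¹), ← map_mul, inv_mul_cancel, map_one, Module.End.one_apply]
  · funext x
    have := S.hπ (x 0) (Function.surjInv S.surj (σQ (x 0)⁻¹ (z x)))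
    simp only [MonoidHom.id_apply] at this
    rw [this, Function.surjInv_eq S.surj, ← Module.End.mul_apply, ← map_mul, mul_inv_cancel, map_one,
      Module.End.one_apply]

theorem liftM (S : SES σM σF σQ) (n : ℕ) {b} (hb : b ∈ Coch σF n)
    (h : ∀ x, S.π (b x) = 0) : ∃ c ∈ Coch σM n, (fun x => S.ι (c x)) = b := by
  choose c hc using fun x => S.exact (b x) (h x)
  refine ⟨c, ?_, funext hc⟩
  intro g x
  apply S.inj
  rw [hc, hb g x, ← hc x]
  exact (S.hι g (c x)).symm

def Rel (S : SES σM σF σQ) (n : ℕ) (z : H σQ n) (y : H σM (n + 1)) : Prop :=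
  ∃ b ∈ Coch σF n, ∃ hz : (fun x => S.π (b x)) ∈ Z σQ n, ∃ c, ∃ hc : c ∈ Z σM (n + 1),
    (fun x => S.ι (c x)) = dd (n + 1) b ∧ z = KT.mk _ _ _ hz ∧ y = KT.mk _ _ c hc

theorem Rel.exists (S : SES σM σF σQ) (n : ℕ) (z : H σQ n) : ∃ y, S.Rel n z y := by
  obtain ⟨z, hz, rfl⟩ := mk_surj _ _ z
  obtain ⟨b, hb, rfl⟩ := S.liftQ n (mem_Z.1 hz).1
  obtain ⟨c, hc, hcb⟩ := S.liftM (n + 1) (dd_mem σF n hb) (by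
    intro x
    have := (mem_Z.1 hz).2
    rw [dd_comp_lin] at this
    exact congrFun this x)
  have hc' : c ∈ Z σM (n + 1) := by
    refine mem_Z.2 ⟨hc, ?_⟩
    have h := dd_comp_lin (n + 2) S.ι c
    rw [hcb, dd_dd] at h
    funext x
    apply S.inj
    rw [Pi.zero_apply, map_zero]
    exact (congrFun h x).symm
  exact ⟨KT.mk _ _ c hc', b, hb, hz, c, hc', hcb, rfl, rfl⟩

theorem Rel.add (S : SES σM σF σQ) {n : ℕ} {z z' y y'} (h : S.Rel n z y) (h' : S.Rel n z' y') :
    S.Rel n (z + z') (y + y') := by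
  obtain ⟨b, hb, hz, c, hc, e, rfl, rfl⟩ := h
  obtain ⟨b', hb', hz', c', hc', e', rfl, rfl⟩ := h'
  have : (fun x => S.π ((b + b') x)) = (fun x => S.π (b x)) + (fun x => S.π (b' x)) := by
    funext x; simp
  refine ⟨b + b', Submodule.add_mem _ hb hb', ?_, c + c', Submodule.add_mem _ hc hc', ?_, ?_, rfl⟩
  · rw [this]; exact Submodule.add_mem _ hz hz'
  · rw [map_add, ← e, ← e']; funext x; simp
  · rw [mk_add]; exact mk_congr _ _ _ _ this.symm

theorem Rel.smul (S : SES σM σF σQ) {n : ℕ} {z y} (r : ℂ) (h : S.Rel n z y) :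
    S.Rel n (r • z) (r • y) := by
  obtain ⟨b, hb, hz, c, hc, e, rfl, rfl⟩ := h
  have : (fun x => S.π ((r • b) x)) = r • (fun x => S.π (b x)) := by
    funext x; simp
  refine ⟨r • b, Submodule.smul_mem _ _ hb, ?_, r • c, Submodule.smul_mem _ _ hc, ?_, ?_, rfl⟩
  · rw [this]; exact Submodule.smul_mem _ _ hz
  · rw [map_smul, ← e]; funext x; simp
  · exact (mk_congr _ _ _ (Submodule.smul_mem _ _ hz) this).symm

theorem Rel.zero (S : SES σM σF σQ) {n : ℕ} {y} (h : S.Rel n 0 y) : y = 0 := by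
  obtain ⟨b, hb, hz, c, hc, e, e1, rfl⟩ := h
  rw [mk_eq_zero, mem_B_succ]
  have e1 := (mk_eq_zero _ _ _ _).1 e1.symm
  cases n with
  | zero =>
    rw [mem_B_zero] at e1
    obtain ⟨m, hm, hmb⟩ := S.liftM 0 hb (fun x => congrFun e1 x)
    refine ⟨m, hm, ?_⟩
    funext x
    apply S.inj
    rw [congrFun e x, ← hmb, dd_comp_lin]
  | succ n =>
    rw [mem_B_succ] at e1
    obtain ⟨q, hq, hq'⟩ := e1
    obtain ⟨t, ht, rfl⟩ := S.liftQ n hq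
    rw [dd_comp_lin] at hq'
    obtain ⟨m, hm, hmb⟩ := S.liftM (n + 1)
      (b := b - dd (n + 1) t) (Submodule.sub_mem _ hb (dd_mem _ _ ht))
      (fun x => by
        have := congrFun hq' x
        rw [Pi.sub_apply, map_sub, this, sub_self])
    refine ⟨m, hm, ?_⟩
    funext x
    apply S.inj
    have h1 := congrFun (dd_comp_lin (n + 2) S.ι m) x
    rw [hmb, map_sub, dd_dd, sub_zero] at h1
    rw [congrFun e x, ← h1]

theorem Rel.unique (S : SES σM σF σQ) {n : ℕ} {z y y'} (h : S.Rel n z y) (h' : S.Rel n z y') :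
    y = y' := by
  have := Rel.zero S (y := y + (-1 : ℂ) • y') (by
    have := h.add S (h'.smul S (-1))
    simpa using this)
  simpa [← sub_eq_add_neg, sub_eq_zero] using this

noncomputable def δ (S : SES σM σF σQ) (n : ℕ) : H σQ n →ₗ[ℂ] H σM (n + 1) where
  toFun z := (Rel.exists S n z).choose
  map_add' z z' := Rel.unique S (Rel.exists S n _).choose_spec
    (Rel.add S (Rel.exists S n _).choose_spec (Rel.exists S n _).choose_spec)
  map_smul' r z := Rel.unique S (Rel.exists S n _).choose_spec
    (Rel.smul S r (Rel.exists S n _).choose_spec)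

theorem δ_rel (S : SES σM σF σQ) (n : ℕ) (z) : S.Rel n z (S.δ n z) :=
  (Rel.exists S n z).choose_spec

theorem δ_eq (S : SES σM σF σQ) {n : ℕ} {z y} (h : S.Rel n z y) : S.δ n z = y :=
  Rel.unique S (S.δ_rel n z) h

theorem L0 (S : SES σM σF σQ) (y : H σM 0) (h : Hmap 0 _ S.ι S.hι y = 0) : y = 0 := by
  obtain ⟨c, hc, rfl⟩ := mk_surj _ _ y
  rw [Hmap_mk, mk_eq_zero, mem_B_zero] at h
  rw [mk_eq_zero, mem_B_zero]
  funext x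
  apply S.inj
  rw [Pi.zero_apply, map_zero]
  exact congrFun h x

theorem L1 (S : SES σM σF σQ) (n : ℕ) (y : H σM (n + 1)) (h : Hmap _ _ S.ι S.hι y = 0) :
    ∃ z, S.δ n z = y := by
  obtain ⟨c, hc, rfl⟩ := mk_surj _ _ y
  rw [Hmap_mk, mk_eq_zero, mem_B_succ] at h
  obtain ⟨b, hb, e⟩ := h
  have hz : (fun x => S.π (b x)) ∈ Z σQ n := by
    refine mem_Z.2 ⟨cmap_Coch S.hπ n hb, ?_⟩
    rw [dd_comp_lin, e]
    funext x
    exact S.comp _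
  exact ⟨KT.mk _ _ _ hz, S.δ_eq ⟨b, hb, hz, c, hc, e.symm, rfl, rfl⟩⟩

theorem L2 (S : SES σM σF σQ) (n : ℕ) (z : H σQ n) (h : S.δ n z = 0) :
    ∃ u, Hmap n _ S.π S.hπ u = z := by
  obtain ⟨b, hb, hz, c, hc, e, e1, e2⟩ := S.δ_rel n z
  subst e1
  rw [h] at e2
  obtain ⟨t, ht, rfl⟩ := mem_B_succ.1 ((mk_eq_zero _ _ _ _).1 e2.symm)
  have hb' : b - (fun x => S.ι (t x)) ∈ Z σF n := by
    refine mem_Z.2 ⟨Submodule.sub_mem _ hb (cmap_Coch S.hι n ht), ?_⟩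
    rw [map_sub, ← e, dd_comp_lin, sub_self]
  refine ⟨KT.mk _ _ _ hb', ?_⟩
  rw [Hmap_mk]
  apply mk_congr
  funext x
  simp only [cmap, LinearMap.coe_mk, AddHom.coe_mk, MonoidHom.id_apply, Pi.sub_apply, map_sub,
    S.comp, sub_zero]

theorem L3 (S : SES σM σF σQ) (n : ℕ) (u : H σF n) : S.δ n (Hmap n _ S.π S.hπ u) = 0 := by
  obtain ⟨b, hb, rfl⟩ := mk_surj _ _ u
  apply S.δ_eq
  refine ⟨b, (mem_Z.1 hb).1, cmap_Z S.hπ n hb, 0, Submodule.zero_mem _, ?_, rfl, rfl⟩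
  rw [(mem_Z.1 hb).2]
  funext x; simp

theorem δ_nat {G' M' F' Q' : Type} [Group G'] [AddCommGroup M'] [Module ℂ M'] [AddCommGroup F']
    [Module ℂ F'] [AddCommGroup Q'] [Module ℂ Q'] {σM' : Rp G' M'} {σF' : Rp G' F'}
    {σQ' : Rp G' Q'} (S' : SES σM' σF' σQ') (S : SES σM σF σQ) (f : G →* G')
    (φM : M' →ₗ[ℂ] M) (φF : F' →ₗ[ℂ] F) (φQ : Q' →ₗ[ℂ] Q)
    (hM : IsMor σM' σM f φM) (hF : IsMor σF' σF f φF) (hQ : IsMor σQ' σQ f φQ)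
    (e1 : ∀ m, φF (S'.ι m) = S.ι (φM m)) (e2 : ∀ m, φQ (S'.π m) = S.π (φF m)) (n : ℕ) (z) :
    Hmap _ f φM hM (S'.δ n z) = S.δ n (Hmap n f φQ hQ z) := by
  obtain ⟨b, hb, hz, c, hc, e, e3, e4⟩ := S'.δ_rel n z
  symm
  apply S.δ_eq
  have h1 : (fun x => S.π (cmap (n + 1) f φF b x)) =
      cmap (n + 1) f φQ (fun x => S'.π (b x)) := by
    funext x
    exact (e2 _).symm
  refine ⟨cmap (n + 1) f φF b, cmap_Coch hF n hb, ?_, cmap (n + 2) f φM c, cmap_Z hM _ hc, ?_,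
    ?_, ?_⟩
  · rw [h1]; exact cmap_Z hQ n hz
  · rw [dd_cmap, ← e]
    funext x
    exact (e1 _).symm
  · rw [e3, Hmap_mk]
    exact mk_congr _ _ _ _ h1.symm
  · rw [e4, Hmap_mk]

theorem δ_split (S : SES σM σF σQ) (τ : Q →ₗ[ℂ] F) (hτ : IsMor σQ σF (MonoidHom.id G) τ)
    (h : ∀ q, S.π (τ q) = q) (n : ℕ) (z) : S.δ n z = 0 := by
  have : z = Hmap n _ S.π S.hπ (Hmap n _ τ hτ z) := by
    rw [Hmap_comp, Hmap_id']
    · rfl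
    · ext q; exact h q
  rw [this]; exact S.L3 n _

/-- Restriction of a short exact sequence. -/
def res {G' : Type} [Group G'] (S : SES σM σF σQ) (f : G' →* G) :
    SES (σM.comp f) (σF.comp f) (σQ.comp f) where
  ι := S.ι
  π := S.π
  hι := fun g m => S.hι (f g) m
  hπ := fun g m => S.hπ (f g) m
  inj := S.inj
  surj := S.surj
  comp := S.comp
  exact := S.exact

end SES

theorem isMor_res {G G' M : Type} [Group G] [Group G'] [AddCommGroup M] [Module ℂ M]
    (ρ : Rp G M) (f : G' →* G) : IsMor ρ (ρ.comp f) f LinearMap.id := fun _ _ => rfl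

/-- Restriction of classes. -/
def res {G G' M : Type} [Group G] [Group G'] [AddCommGroup M] [Module ℂ M]
    {ρ : Rp G M} (n : ℕ) (f : G' →* G) : H ρ n →ₗ[ℂ] H (ρ.comp f) n :=
  Hmap n f LinearMap.id (isMor_res ρ f)

theorem SES.δ_res {G G' M F Q : Type} [Group G] [Group G'] [AddCommGroup M] [Module ℂ M]
    [AddCommGroup F] [Module ℂ F]
    [AddCommGroup Q] [Module ℂ Q] {σM : Rp G M} {σF : Rp G F} {σQ : Rp G Q}
    (S : SES σM σF σQ) (f : G' →* G) (n : ℕ) (z) :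
    KT.res (ρ := σM) (n + 1) f (S.δ n z) = (S.res f).δ n (KT.res (ρ := σQ) n f z) :=
  SES.δ_nat S (S.res f) f _ LinearMap.id _ _ (isMor_res σF f) _ (fun _ => rfl) (fun _ => rfl) n z

/-- Integration structure: forces vanishing of higher cohomology. -/
def Intg {G W : Type} [Group G] [AddCommGroup W] [Module ℂ W] (σ : Rp G W) : Prop :=
  ∃ I : (G → W) →ₗ[ℂ] W, (∀ g w, I (fun k => σ g (w (g⁻¹ * k))) = σ g (I w)) ∧
    ∀ w, I (fun _ => w) = w

theorem vanish {G W : Type} [Group G] [AddCommGroup W] [Module ℂ W] {σ : Rp G W} (h : Intg σ)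
    (n : ℕ) (y : H σ (n + 1)) : y = 0 := by
  obtain ⟨I, hI, hc⟩ := h
  obtain ⟨c, hcZ, rfl⟩ := mk_surj _ _ y
  rw [mk_eq_zero, mem_B_succ]
  obtain ⟨hC, hd⟩ := mem_Z.1 hcZ
  refine ⟨fun x => I (fun k => c (Fin.cons k x)), ?_, ?_⟩
  · intro g x
    change I (fun k => c (Fin.cons k fun i => g * x i)) = _
    rw [← hI]
    congr 1
    funext k
    rw [← hC]
    congr 1
    funext i
    refine Fin.cases ?_ (fun i => ?_) i <;> simp
  · funext x
    have h1 : ∀ k, dd (n + 1) (fun y => c (Fin.cons k y)) x = c x := by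
      intro k
      have := congrFun hd (Fin.cons k x)
      rw [dd_cons, Pi.zero_apply, sub_eq_zero] at this
      exact this.symm
    have h2 : (fun k => dd (n + 1) (fun y => c (Fin.cons k y)) x) = fun _ => c x := funext h1
    rw [← hc (c x), ← h2, dd_apply]
    have : (fun k => dd (n + 1) (fun y => c (Fin.cons k y)) x) =
        ∑ i : Fin (n + 2), (-1 : ℤ) ^ (i : ℕ) • (fun k => c (Fin.cons k fun j => x (i.succAbove j))) := by
      funext k; simp [dd_apply]
    rw [this, map_sum]
    refine Finset.sum_congr rfl fun i _ => ?_
    rw [map_zsmul]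


section tools

variable {G G' G'' G₁ M M' M'' M₁ : Type} [Group G] [Group G'] [Group G''] [Group G₁]
  [AddCommGroup M] [Module ℂ M] [AddCommGroup M'] [Module ℂ M'] [AddCommGroup M''] [Module ℂ M'']
  [AddCommGroup M₁] [Module ℂ M₁]
  {ρ : Rp G M} {ρ' : Rp G' M'} {ρ'' : Rp G'' M''} {ρ₁ : Rp G₁ M₁}

theorem Hmap_tri (n : ℕ) {f : G →* G'} {φ : M' →ₗ[ℂ] M} {f' : G' →* G''} {φ' : M'' →ₗ[ℂ] M'}
    {f₂ : G →* G''} {φ₂ : M'' →ₗ[ℂ] M}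
    (h : IsMor ρ' ρ f φ) (h' : IsMor ρ'' ρ' f' φ') (h₂ : IsMor ρ'' ρ f₂ φ₂)
    (e : ∀ g, f' (f g) = f₂ g) (e' : ∀ m, φ (φ' m) = φ₂ m) (y) :
    Hmap n f φ h (Hmap n f' φ' h' y) = Hmap n f₂ φ₂ h₂ y := by
  rw [Hmap_comp]
  exact Hmap_congr _ _ _ (MonoidHom.ext e) (LinearMap.ext e') _

theorem Hmap_sq (n : ℕ) {f : G →* G'} {φ : M' →ₗ[ℂ] M} {f' : G' →* G''} {φ' : M'' →ₗ[ℂ] M'}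
    {f₁ : G →* G₁} {φ₁ : M₁ →ₗ[ℂ] M} {f₁' : G₁ →* G''} {φ₁' : M'' →ₗ[ℂ] M₁}
    (h : IsMor ρ' ρ f φ) (h' : IsMor ρ'' ρ' f' φ')
    (h₁ : IsMor ρ₁ ρ f₁ φ₁) (h₁' : IsMor ρ'' ρ₁ f₁' φ₁')
    (e : ∀ g, f' (f g) = f₁' (f₁ g)) (e' : ∀ m, φ (φ' m) = φ₁ (φ₁' m)) (y) :
    Hmap n f φ h (Hmap n f' φ' h' y) = Hmap n f₁ φ₁ h₁ (Hmap n f₁' φ₁' h₁' y) := by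
  rw [Hmap_comp, Hmap_comp]
  exact Hmap_congr _ _ _ (MonoidHom.ext e) (LinearMap.ext e') _

/-- If a map factors as a zero map, it vanishes. -/
theorem Hmap_zero_of (n : ℕ) {f : G →* G'} {φ : M' →ₗ[ℂ] M} {f' : G' →* G''} {φ' : M'' →ₗ[ℂ] M'}
    {f₂ : G →* G''} {φ₂ : M'' →ₗ[ℂ] M}
    (h : IsMor ρ' ρ f φ) (h' : IsMor ρ'' ρ' f' φ') (h₂ : IsMor ρ'' ρ f₂ φ₂)
    (e : ∀ g, f' (f g) = f₂ g) (e' : ∀ m, φ (φ' m) = φ₂ m) (y)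
    (h0 : Hmap n f' φ' h' y = 0) : Hmap n f₂ φ₂ h₂ y = 0 := by
  rw [← Hmap_tri n h h' h₂ e e', h0, map_zero]

theorem Hmap_zero_coef (n : ℕ) {f : G →* G'} {φ : M' →ₗ[ℂ] M} (h : IsMor ρ' ρ f φ)
    (e : ∀ m, φ m = 0) (y) : Hmap n f φ h y = 0 := by
  obtain ⟨c, hc, rfl⟩ := mk_surj _ _ y
  rw [Hmap_mk, mk_eq_zero]
  have : cmap (n + 1) f φ c = 0 := by funext x; exact e _
  rw [this]; exact Submodule.zero_mem _

theorem H0_mem (ρ : Rp G M) (m : M) (hm : ∀ g, ρ g m = m) : (fun _ => m) ∈ Z ρ 0 := by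
  refine mem_Z.2 ⟨fun g x => (hm g).symm, ?_⟩
  funext x
  rw [dd_apply, Fin.sum_univ_two]; simp

def H0 (ρ : Rp G M) (m : M) (hm : ∀ g, ρ g m = m) : H ρ 0 := mk ρ 0 (fun _ => m) (H0_mem ρ m hm)

theorem H0_surj (y : H ρ 0) : ∃ m hm, y = H0 ρ m hm := by
  obtain ⟨c, hc, rfl⟩ := mk_surj _ _ y
  refine ⟨c 1, fun g => Z_zero_inv hc g 1, ?_⟩
  exact mk_congr _ _ _ _ (funext fun x => Z_zero_const hc _ _)

theorem H0_eq_zero {m : M} {hm} : H0 ρ m hm = 0 ↔ m = 0 := by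
  rw [H0, mk_eq_zero, mem_B_zero]
  exact ⟨fun h => congrFun h 1, fun h => by subst h; rfl⟩

theorem H0_congr {m m' : M} {hm hm'} (h : m = m') : H0 ρ m hm = H0 ρ m' hm' := by
  subst h; rfl

theorem Hmap_H0 {f : G →* G'} {φ : M' →ₗ[ℂ] M} (h : IsMor ρ' ρ f φ) (m hm) :
    Hmap 0 f φ h (H0 ρ' m hm) = H0 ρ (φ m) (fun g => by rw [← h, hm]) := rfl

end tools

section funrep

variable {K Y M : Type} [Group K] [AddCommGroup M] [Module ℂ M]

/-- Functions on `Y` with values in `M`. -/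
def funRep (a : K →* Equiv.Perm Y) (ρ : Rp K M) : Rp K (Y → M) where
  toFun k :=
    { toFun := fun u y => ρ k (u ((a k)⁻¹ y))
      map_add' := fun u v => by funext y; simp
      map_smul' := fun c u => by funext y; simp }
  map_one' := by
    apply LinearMap.ext; intro u; funext y; simp
  map_mul' k l := by
    apply LinearMap.ext; intro u; funext y; simp

theorem funRep_apply (a : K →* Equiv.Perm Y) (ρ : Rp K M) (k u y) :
    funRep a ρ k u y = ρ k (u ((a k)⁻¹ y)) := rfl

def cst (Y M : Type) [AddCommGroup M] [Module ℂ M] : M →ₗ[ℂ] (Y → M) where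
  toFun m := fun _ => m
  map_add' _ _ := rfl
  map_smul' _ _ := rfl

abbrev QM (Y M : Type) [AddCommGroup M] [Module ℂ M] := (Y → M) ⧸ LinearMap.range (cst Y M)

def qmk (Y M : Type) [AddCommGroup M] [Module ℂ M] : (Y → M) →ₗ[ℂ] QM Y M :=
  Submodule.mkQ _

theorem qmk_surj (q : QM Y M) : ∃ u, qmk Y M u = q := Submodule.mkQ_surjective _ q

theorem qmk_eq_zero (u : Y → M) : qmk Y M u = 0 ↔ ∃ m, u = fun _ => m := by
  unfold qmk
  rw [Submodule.mkQ_apply, Submodule.Quotient.mk_eq_zero]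
  exact ⟨fun ⟨m, h⟩ => ⟨m, h.symm⟩, fun ⟨m, h⟩ => ⟨m, h.symm⟩⟩

theorem qmk_cst (m : M) : qmk Y M (cst Y M m) = 0 := (qmk_eq_zero _).2 ⟨m, rfl⟩

/-- descend a map to the quotient -/
def qlift {N : Type} [AddCommGroup N] [Module ℂ N] (τ : (Y → M) →ₗ[ℂ] N)
    (h : ∀ m, τ (fun _ => m) = 0) : QM Y M →ₗ[ℂ] N :=
  Submodule.liftQ _ τ (by rintro _ ⟨m, rfl⟩; exact h m)

theorem qlift_qmk {N : Type} [AddCommGroup N] [Module ℂ N] (τ : (Y → M) →ₗ[ℂ] N)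
    (h : ∀ m, τ (fun _ => m) = 0) (u) : qlift τ h (qmk Y M u) = τ u := rfl

def pull {Y' M' : Type} [AddCommGroup M'] [Module ℂ M'] (j : Y → Y') (φ : M' →ₗ[ℂ] M) :
    (Y' → M') →ₗ[ℂ] (Y → M) where
  toFun u := fun y => φ (u (j y))
  map_add' _ _ := by funext y; simp
  map_smul' _ _ := by funext y; simp

def qpull {Y' M' : Type} [AddCommGroup M'] [Module ℂ M'] (j : Y → Y') (φ : M' →ₗ[ℂ] M) :
    QM Y' M' →ₗ[ℂ] QM Y M :=
  qlift ((qmk Y M).comp (pull j φ)) (fun m => qmk_cst (φ m))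

theorem qpull_qmk {Y' M' : Type} [AddCommGroup M'] [Module ℂ M'] (j : Y → Y') (φ : M' →ₗ[ℂ] M)
    (u) : qpull j φ (qmk Y' M' u) = qmk Y M (pull j φ u) := rfl

def QRep (a : K →* Equiv.Perm Y) (ρ : Rp K M) : Rp K (QM Y M) where
  toFun k := qlift ((qmk Y M).comp (funRep a ρ k)) (fun m => qmk_cst (ρ k m))
  map_one' := by
    apply LinearMap.ext; intro q
    obtain ⟨u, rfl⟩ := qmk_surj q
    change qmk Y M (funRep a ρ 1 u) = qmk Y M u
    rw [map_one]; rfl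
  map_mul' k l := by
    apply LinearMap.ext; intro q
    obtain ⟨u, rfl⟩ := qmk_surj q
    change qmk Y M (funRep a ρ (k * l) u) = qmk Y M (funRep a ρ k (funRep a ρ l u))
    rw [map_mul]; rfl

theorem QRep_qmk (a : K →* Equiv.Perm Y) (ρ : Rp K M) (k u) :
    QRep a ρ k (qmk Y M u) = qmk Y M (funRep a ρ k u) := rfl

theorem cst_mor (a : K →* Equiv.Perm Y) (ρ : Rp K M) :
    IsMor ρ (funRep a ρ) (MonoidHom.id K) (cst Y M) := fun _ _ => rfl

def cSES [Nonempty Y] (a : K →* Equiv.Perm Y) (ρ : Rp K M) :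
    SES ρ (funRep a ρ) (QRep a ρ) where
  ι := cst Y M
  π := qmk Y M
  hι := cst_mor a ρ
  hπ := fun _ _ => rfl
  inj := fun m m' h => congrFun h (Classical.arbitrary Y)
  surj := qmk_surj
  comp := qmk_cst
  exact := fun u h => by
    obtain ⟨m, rfl⟩ := (qmk_eq_zero u).1 h
    exact ⟨m, rfl⟩

section
variable {K' Y' M' : Type} [Group K'] [AddCommGroup M'] [Module ℂ M']

theorem pull_mor {a : K →* Equiv.Perm Y} {a' : K' →* Equiv.Perm Y'} {ρ : Rp K M} {ρ' : Rp K' M'}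
    {f : K →* K'} {j : Y → Y'} {φ : M' →ₗ[ℂ] M} (hj : ∀ k y, j (a k y) = a' (f k) (j y))
    (hφ : IsMor ρ' ρ f φ) : IsMor (funRep a' ρ') (funRep a ρ) f (pull j φ) := by
  intro k u
  funext y
  change φ (ρ' (f k) (u ((a' (f k))⁻¹ (j y)))) = ρ k (φ (u (j ((a k)⁻¹ y))))
  rw [hφ, ← map_inv, ← map_inv f, ← hj, map_inv]

theorem qpull_mor {a : K →* Equiv.Perm Y} {a' : K' →* Equiv.Perm Y'} {ρ : Rp K M} {ρ' : Rp K' M'}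
    {f : K →* K'} {j : Y → Y'} {φ : M' →ₗ[ℂ] M} (hj : ∀ k y, j (a k y) = a' (f k) (j y))
    (hφ : IsMor ρ' ρ f φ) : IsMor (QRep a' ρ') (QRep a ρ) f (qpull j φ) := by
  intro k q
  obtain ⟨u, rfl⟩ := qmk_surj q
  rw [QRep_qmk, qpull_qmk, qpull_qmk, QRep_qmk, pull_mor hj hφ]

theorem cSES_nat [Nonempty Y] [Nonempty Y'] {a : K →* Equiv.Perm Y} {a' : K' →* Equiv.Perm Y'}
    {ρ : Rp K M} {ρ' : Rp K' M'} {f : K →* K'} {j : Y → Y'} {φ : M' →ₗ[ℂ] M}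
    (hj : ∀ k y, j (a k y) = a' (f k) (j y)) (hφ : IsMor ρ' ρ f φ) (n : ℕ) (z) :
    Hmap (n + 1) f φ hφ ((cSES a' ρ').δ n z) =
      (cSES a ρ).δ n (Hmap n f (qpull j φ) (qpull_mor hj hφ) z) :=
  SES.δ_nat _ _ _ _ (pull j φ) _ _ (pull_mor hj hφ) _ (fun _ => rfl) (fun _ => rfl) _ _

end

/-- Applying `Fun(Y, -)` to a short exact sequence. -/
def funSES {F Q : Type} [AddCommGroup F] [Module ℂ F] [AddCommGroup Q] [Module ℂ Q]
    {σM : Rp K M} {σF : Rp K F} {σQ : Rp K Q} (a : K →* Equiv.Perm Y) (S : SES σM σF σQ) :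
    SES (funRep a σM) (funRep a σF) (funRep a σQ) where
  ι := pull id S.ι
  π := pull id S.π
  hι := pull_mor (fun _ _ => rfl) S.hι
  hπ := pull_mor (fun _ _ => rfl) S.hπ
  inj := fun u v h => by
    funext y; exact S.inj (congrFun h y)
  surj := fun u => by
    choose v hv using fun y => S.surj (u y)
    exact ⟨v, funext hv⟩
  comp := fun u => by
    funext y; exact S.comp _
  exact := fun u h => by
    choose v hv using fun y => S.exact (u y) (congrFun h y)
    exact ⟨v, funext hv⟩

theorem intg_fun (a : K →* Equiv.Perm Y) (ρ : Rp K M) (c : Y → K)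
    (hc : ∀ k y, c (a k y) = k * c y) : Intg (funRep a ρ) := by
  refine ⟨{ toFun := fun w y => w (c y) y
            map_add' := fun _ _ => rfl
            map_smul' := fun _ _ => rfl }, ?_, fun _ => rfl⟩
  intro g w
  funext y
  change ρ g (w (g⁻¹ * c y) ((a g)⁻¹ y)) = ρ g (w (c ((a g)⁻¹ y)) ((a g)⁻¹ y))
  rw [← hc, map_inv]

theorem intg_funfun (a : K →* Equiv.Perm Y) {σ : Rp K M} (h : Intg σ) : Intg (funRep a σ) := by
  obtain ⟨I, hI, hc⟩ := h
  refine ⟨{ toFun := fun w y => I (fun k => w k y)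
            map_add' := fun u v => ?_
            map_smul' := fun r u => ?_ }, ?_, ?_⟩
  · funext y; exact map_add I (fun k => u k y) (fun k => v k y)
  · funext y; exact map_smul I r (fun k => u k y)
  · intro g w
    funext y
    exact hI g (fun k => w k ((a g)⁻¹ y))
  · intro w; funext y; exact hc (w y)

/-- left multiplication -/
def lm (K : Type) [Group K] : K →* Equiv.Perm K := MulAction.toPermHom K K

theorem lm_apply (k x : K) : lm K k x = k * x := rfl

theorem intg_lm (ρ : Rp K M) : Intg (funRep (lm K) ρ) :=
  intg_fun _ _ id (fun _ _ => rfl)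

/-- evaluation at a point -/
def ev {N : Type} [AddCommGroup N] [Module ℂ N] (y0 : Y) (φ : M →ₗ[ℂ] N) : (Y → M) →ₗ[ℂ] N where
  toFun u := φ (u y0)
  map_add' _ _ := by simp
  map_smul' _ _ := by simp

theorem ev_apply {N : Type} [AddCommGroup N] [Module ℂ N] (y0 : Y) (φ : M →ₗ[ℂ] N) (u : Y → M) :
    ev y0 φ u = φ (u y0) := rfl

theorem ev_mor {S N : Type} [Group S] [AddCommGroup N] [Module ℂ N]
    {a : K →* Equiv.Perm Y} {ρ : Rp K M} {y0 : Y} {i : S →* K} {σ : Rp S N} {φ : M →ₗ[ℂ] N}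
    (h : ∀ s, a (i s) y0 = y0) (hφ : IsMor ρ σ i φ) :
    IsMor (funRep a ρ) σ i (ev y0 φ) := by
  intro s u
  change φ (ρ (i s) (u ((a (i s))⁻¹ y0))) = σ s (φ (u y0))
  rw [hφ, ← map_inv, ← map_inv i, h]

theorem shapiro_lift {S : Type} [Group S] {a : K →* Equiv.Perm Y} {y0 : Y} {i : S →* K}
    (hs : ∀ s, a (i s) y0 = y0) (hst : ∀ k, a k y0 = y0 → ∃ s, i s = k)
    (htr : ∀ y, ∃ k, a k y0 = y) (τ : Rp K M) (v : H (τ.comp i) 0) :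
    ∃ v' : H (funRep a τ) 0, Hmap 0 _ _ (ev_mor hs (isMor_res τ i)) v' = v := by
  choose kk hkk using htr
  obtain ⟨m, hm, rfl⟩ := H0_surj v
  have key : ∀ k l, a k y0 = a l y0 → τ k m = τ l m := by
    intro k l hkl
    obtain ⟨s, hs'⟩ := hst (l⁻¹ * k) (by
      rw [map_mul, Equiv.Perm.mul_apply, hkl, map_inv, Equiv.Perm.inv_eq_iff_eq])
    have h1 := hm s
    rw [MonoidHom.comp_apply, hs'] at h1
    have h2 : k = l * (l⁻¹ * k) := by group
    rw [h2, map_mul, Module.End.mul_apply, h1]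
  refine ⟨H0 _ (fun y => τ (kk y) m) ?_, ?_⟩
  · intro g
    funext y
    rw [funRep_apply, ← Module.End.mul_apply, ← map_mul]
    apply key
    rw [map_mul, Equiv.Perm.mul_apply, hkk, hkk]; simp
  · rw [Hmap_H0]
    apply H0_congr
    change τ (kk y0) m = m
    rw [key (kk y0) 1 (by rw [hkk, map_one]; rfl), map_one]; rfl

theorem exists_transversal {S : Type} [Group S] (i : S →* K) (hi : Function.Injective i) :
    ∃ c : K → S, ∀ s k, c (i s * k) = s * c k := by
  let r := fun k : K => (QuotientGroup.mk k⁻¹ : K ⧸ i.range).out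
  have hr : ∀ k, ∃ s, i s = k * r k := by
    intro k
    have : (QuotientGroup.mk (r k) : K ⧸ i.range) = QuotientGroup.mk k⁻¹ :=
      Quotient.out_eq _
    rw [QuotientGroup.eq] at this
    obtain ⟨s, hs⟩ := this
    refine ⟨s⁻¹, ?_⟩
    rw [map_inv, hs]; group
  choose c hc using hr
  refine ⟨c, fun s k => hi ?_⟩
  rw [hc, map_mul, hc, mul_assoc]
  congr 2
  have : (QuotientGroup.mk (i s * k)⁻¹ : K ⧸ i.range) = QuotientGroup.mk k⁻¹ := by
    rw [QuotientGroup.eq]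
    refine ⟨s, by group⟩
  change (QuotientGroup.mk (i s * k)⁻¹ : K ⧸ i.range).out = _
  rw [this]

theorem shapiro_step {S F Q : Type} [Group S] [AddCommGroup F] [Module ℂ F] [AddCommGroup Q]
    [Module ℂ Q] {a : K →* Equiv.Perm Y} {y0 : Y} {i : S →* K}
    (hs : ∀ s, a (i s) y0 = y0) {ρ : Rp K M} {τ : Rp K F} {κ : Rp K Q} (S0 : SES ρ τ κ) (n : ℕ)
    (h1 : ∀ y : H (funRep a τ) (n + 1), y = 0)
    (h2 : ∀ v : H (τ.comp i) n, ∃ v', Hmap n _ _ (ev_mor hs (isMor_res τ i)) v' = v)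
    (h3 : ∀ z : H (funRep a κ) n, Hmap n _ _ (ev_mor hs (isMor_res κ i)) z = 0 → z = 0)
    (u : H (funRep a ρ) (n + 1)) (hu : Hmap (n + 1) _ _ (ev_mor hs (isMor_res ρ i)) u = 0) :
    u = 0 := by
  obtain ⟨z, rfl⟩ := (funSES a S0).L1 n u (h1 _)
  have hn := SES.δ_nat (funSES a S0) (S0.res i) i (ev y0 LinearMap.id) (ev y0 LinearMap.id)
    (ev y0 LinearMap.id) (ev_mor hs (isMor_res ρ i)) (ev_mor hs (isMor_res τ i))
    (ev_mor hs (isMor_res κ i)) (fun _ => rfl) (fun _ => rfl) n z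
  rw [hu] at hn
  obtain ⟨v, hv⟩ := (S0.res i).L2 n _ hn.symm
  obtain ⟨v', rfl⟩ := h2 v
  have hz : z - Hmap n _ _ (funSES a S0).hπ v' = 0 := by
    apply h3
    rw [map_sub, sub_eq_zero, ← hv]
    exact (Hmap_sq n (ev_mor hs (isMor_res κ i)) (funSES a S0).hπ (S0.res i).hπ
      (ev_mor hs (isMor_res τ i)) (fun _ => rfl) (fun _ => rfl) v').symm
  rw [sub_eq_zero] at hz
  rw [hz]; exact (funSES a S0).L3 n v'

theorem shapiro_aux {S : Type} [Group S] (a : K →* Equiv.Perm Y) (y0 : Y) (i : S →* K)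
    (hi : Function.Injective i) (hs : ∀ s, a (i s) y0 = y0) (hst : ∀ k, a k y0 = y0 → ∃ s, i s = k)
    (htr : ∀ y, ∃ k, a k y0 = y) (n : ℕ) :
    ∀ (M : Type) [AddCommGroup M] [Module ℂ M] (ρ : Rp K M) (u : H (funRep a ρ) n),
      Hmap n _ _ (ev_mor hs (isMor_res ρ i)) u = 0 → u = 0 := by
  induction n with
  | zero =>
    intro M _ _ ρ u hu
    choose kk hkk using htr
    obtain ⟨v, hv, rfl⟩ := H0_surj u
    rw [Hmap_H0, H0_eq_zero] at hu
    rw [H0_eq_zero]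
    change v y0 = 0 at hu
    funext y
    have h1 := congrFun (hv (kk y)) y
    rw [funRep_apply] at h1
    have h2 : (a (kk y))⁻¹ y = y0 := by
      rw [Equiv.Perm.inv_eq_iff_eq, hkk]
    rw [h2, hu, map_zero] at h1
    exact h1.symm
  | succ n ih =>
    intro M _ _ ρ u hu
    refine shapiro_step hs (cSES (lm K) ρ) n (vanish (intg_funfun a (intg_lm ρ)) n) ?_ (ih _ _) u hu
    intro v
    cases n with
    | zero => exact shapiro_lift hs hst htr _ v
    | succ n =>
      refine ⟨0, ?_⟩
      rw [map_zero]
      symm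
      obtain ⟨c, hc⟩ := exists_transversal i hi
      have hI : Intg ((funRep (lm K) ρ).comp i) :=
        intg_fun ((lm K).comp i) (ρ.comp i) c hc
      exact vanish hI n v

/-- Injectivity in the Shapiro lemma. -/
theorem shapiro {S : Type} [Group S]
    (a : K →* Equiv.Perm Y) (y0 : Y) (i : S →* K)
    (hi : Function.Injective i) (hs : ∀ s, a (i s) y0 = y0) (hst : ∀ k, a k y0 = y0 → ∃ s, i s = k)
    (htr : ∀ y, ∃ k, a k y0 = y) {n : ℕ} {ρ : Rp K M} {σ : Rp S M}
    (hσ : IsMor ρ σ i LinearMap.id) (u : H (funRep a ρ) n)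
    (hu : Hmap n _ _ (ev_mor hs hσ) u = 0) : u = 0 := by
  have : σ = ρ.comp i := by
    apply MonoidHom.ext; intro s
    apply LinearMap.ext; intro m
    exact (hσ s m).symm
  subst this
  exact shapiro_aux a y0 i hi hs hst htr n M ρ u hu

/-- If the restriction to the stabilizer vanishes, so does the image in `Fun(Y, M)`. -/
theorem shapiro_cst {S : Type} [Group S]
    (a : K →* Equiv.Perm Y) (y0 : Y) (i : S →* K)
    (hi : Function.Injective i) (hs : ∀ s, a (i s) y0 = y0) (hst : ∀ k, a k y0 = y0 → ∃ s, i s = k)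
    (htr : ∀ y, ∃ k, a k y0 = y) {n : ℕ} {ρ : Rp K M} {σ : Rp S M}
    (hσ : IsMor ρ σ i LinearMap.id) (u : H ρ n)
    (hu : Hmap n i LinearMap.id hσ u = 0) :
    Hmap n (MonoidHom.id K) (cst Y M) (cst_mor a ρ) u = 0 := by
  apply shapiro a y0 i hi hs hst htr hσ
  rw [Hmap_tri n (ev_mor hs hσ) (cst_mor a ρ) hσ (fun _ => rfl) (fun _ => rfl), hu]

/-- Inner automorphisms act trivially. -/
theorem conj_inv (u : K) (n : ℕ) :
    ∀ (M : Type) [AddCommGroup M] [Module ℂ M] (ρ : Rp K M)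
      (h : IsMor ρ ρ (MulAut.conj u).toMonoidHom (ρ u⁻¹)) (y : H ρ n),
      Hmap n _ _ h y = y := by
  induction n with
  | zero =>
    intro M _ _ ρ h y
    obtain ⟨m, hm, rfl⟩ := H0_surj y
    rw [Hmap_H0]
    exact H0_congr (hm _)
  | succ n ih =>
    intro M _ _ ρ h y
    have hh : ∀ (N : Type) [AddCommGroup N] [Module ℂ N] (σ : Rp K N),
        IsMor σ σ (MulAut.conj u).toMonoidHom (σ u⁻¹) := by
      intro N _ _ σ g m
      rw [← Module.End.mul_apply, ← map_mul, ← Module.End.mul_apply, ← map_mul]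
      congr 2
      simp [mul_assoc]
    let S0 := cSES (lm K) ρ
    obtain ⟨z, rfl⟩ := S0.L1 n y (vanish (intg_lm ρ) n _)
    rw [SES.δ_nat S0 S0 _ _ _ _ h (hh _ _) (hh _ _) (fun _ => rfl) (fun _ => rfl), ih]

theorem conj_eq {G : Type} [Group G] {σ : Rp G M} {ρ : Rp K M} (f f' : G →* K) (u : K)
    (hu : ∀ m, ρ u⁻¹ m = m) (hf : ∀ g, f' g = u * f g * u⁻¹)
    (h : IsMor ρ σ f LinearMap.id) (h' : IsMor ρ σ f' LinearMap.id) {n : ℕ} (y : H ρ n) :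
    Hmap n f _ h y = Hmap n f' _ h' y := by
  have hh : IsMor ρ ρ (MulAut.conj u).toMonoidHom (ρ u⁻¹) := by
      intro g m
      rw [← Module.End.mul_apply, ← map_mul, ← Module.End.mul_apply, ← map_mul]
      congr 2
      simp [mul_assoc]
  conv_lhs => rw [← conj_inv u n M ρ hh y]
  exact Hmap_tri n _ _ _ (fun g => (hf g).symm) hu _

/-- The filtration by products of classes in the kernel. -/
def Fil [Nonempty Y] (a : K →* Equiv.Perm Y) : (p n : ℕ) →
    ∀ {M : Type} [AddCommGroup M] [Module ℂ M] (ρ : Rp K M), H ρ n → Prop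
  | 0, _, _, _, _, _, _ => True
  | _ + 1, 0, _, _, _, _, y => y = 0
  | p + 1, n + 1, _, _, _, ρ, y => ∃ z, Fil a p n (QRep a ρ) z ∧ (cSES a ρ).δ n z = y

theorem Fil_zero [Nonempty Y] (a : K →* Equiv.Perm Y) (p n : ℕ) (ρ : Rp K M) :
    Fil a p n ρ 0 := by
  induction p generalizing n M with
  | zero => trivial
  | succ p ih =>
    cases n with
    | zero => rfl
    | succ n => exact ⟨0, ih n _, map_zero _⟩

theorem Fil_big [Nonempty Y] (a : K →* Equiv.Perm Y) (p n : ℕ) (hp : n < p) (ρ : Rp K M)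
    (y : H ρ n) (h : Fil a p n ρ y) : y = 0 := by
  induction p generalizing n M with
  | zero => omega
  | succ p ih =>
    cases n with
    | zero => exact h
    | succ n =>
      obtain ⟨z, hz, rfl⟩ := h
      rw [ih n (by omega) _ z hz, map_zero]

theorem Fil_mono [Nonempty Y] (a : K →* Equiv.Perm Y) (p n : ℕ) (ρ : Rp K M)
    (y : H ρ n) (h : Fil a (p + 1) n ρ y) : Fil a p n ρ y := by
  induction p generalizing n M with
  | zero => trivial
  | succ p ih =>
    cases n with
    | zero => exact h
    | succ n =>
      obtain ⟨z, hz, rfl⟩ := h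
      exact ⟨z, ih n _ z hz, rfl⟩

theorem Fil_nat {K' Y' M' : Type} [Group K'] [AddCommGroup M'] [Module ℂ M']
    [Nonempty Y] [Nonempty Y'] {a : K →* Equiv.Perm Y} {a' : K' →* Equiv.Perm Y'}
    {f : K →* K'} {j : Y → Y'} (hj : ∀ k y, j (a k y) = a' (f k) (j y)) (p n : ℕ)
    {ρ : Rp K M} {ρ' : Rp K' M'} {φ : M' →ₗ[ℂ] M} (hφ : IsMor ρ' ρ f φ) (y : H ρ' n)
    (h : Fil a' p n ρ' y) : Fil a p n ρ (Hmap n f φ hφ y) := by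
  induction p generalizing n M M' with
  | zero => trivial
  | succ p ih =>
    cases n with
    | zero => 
      have h : y = 0 := h
      rw [h, map_zero]; rfl
    | succ n =>
      obtain ⟨z, hz, rfl⟩ := h
      exact ⟨_, ih n (qpull_mor hj hφ) z hz, (cSES_nat hj hφ n z).symm⟩

/-- Positive filtration restricts to zero on stabilizers. -/
theorem Fil_res {S : Type} [Group S] [Nonempty Y] {a : K →* Equiv.Perm Y} {y0 : Y} {i : S →* K}
    (hs : ∀ s, a (i s) y0 = y0) {p n : ℕ} {ρ : Rp K M} {σ : Rp S M}
    (hσ : IsMor ρ σ i LinearMap.id) (y : H ρ n) (h : Fil a (p + 1) n ρ y) :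
    Hmap n i _ hσ y = 0 := by
  have : σ = ρ.comp i := by
    apply MonoidHom.ext; intro s
    apply LinearMap.ext; intro m
    exact (hσ s m).symm
  subst this
  cases n with
  | zero =>
    have h : y = 0 := h
    rw [h, map_zero]
  | succ n =>
    obtain ⟨z, -, rfl⟩ := h
    rw [show Hmap (n + 1) i LinearMap.id hσ ((cSES a ρ).δ n z) = _ from (cSES a ρ).δ_res i n z]
    let τ0 : (Y → M) →ₗ[ℂ] (Y → M) := LinearMap.id - (cst Y M).comp (ev y0 LinearMap.id)
    have hτ0 : ∀ u y, τ0 u y = u y - u y0 := fun _ _ => rfl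
    refine SES.δ_split _ (qlift τ0 ?_) ?_ ?_ n _
    · intro m; funext y; rw [hτ0]; simp
    · intro s q
      obtain ⟨u, rfl⟩ := qmk_surj q
      change τ0 (funRep a ρ (i s) u) = funRep a ρ (i s) (τ0 u)
      funext y
      rw [hτ0, funRep_apply, funRep_apply, funRep_apply, hτ0, map_sub, ← map_inv, ← map_inv i, hs]
    · intro q
      obtain ⟨u, rfl⟩ := qmk_surj q
      change qmk Y M (τ0 u) = qmk Y M u
      rw [← sub_eq_zero, ← map_sub, qmk_eq_zero]
      refine ⟨- u y0, ?_⟩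
      funext y
      rw [Pi.sub_apply, hτ0]; abel

theorem Fil_all (p n : ℕ) (h : p ≤ n) (ρ : Rp K M) (y : H ρ n) : Fil (lm K) p n ρ y := by
  induction p generalizing n M with
  | zero => trivial
  | succ p ih =>
    cases n with
    | zero => omega
    | succ n =>
      obtain ⟨z, rfl⟩ := (cSES (lm K) ρ).L1 n y (vanish (intg_lm ρ) n _)
      exact ⟨z, ih n (by omega) _ z, rfl⟩

end funrep

section swindle

theorem exists_swindle (C : Type) [Group C] : ∃ (C' : Type) (_ : Group C') (μ : C × C →* C')
    (u : C'), Function.Injective μ ∧ ∀ c, μ (c, c) = u * μ (1, c) * u⁻¹ := by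
  let i1 : C →* C × C := MonoidHom.inr C C
  let i2 : C →* C × C := (MonoidHom.id C).prod (MonoidHom.id C)
  have h1 : Function.Injective i1 := fun a b h => congrArg Prod.snd h
  have h2 : Function.Injective i2 := fun a b h => congrArg Prod.snd h
  let e : i1.range ≃* i2.range :=
    (MonoidHom.ofInjective h1).symm.trans (MonoidHom.ofInjective h2)
  refine ⟨HNNExtension (C × C) i1.range i2.range e, inferInstance, HNNExtension.of, HNNExtension.t,
    HNNExtension.of_injective _, fun c => ?_⟩
  have := HNNExtension.t_mul_of (φ := e) (MonoidHom.ofInjective h1 c)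
  rw [eq_mul_inv_iff_mul_eq]
  have h3 : e (MonoidHom.ofInjective h1 c) = MonoidHom.ofInjective h2 c := by
    simp [e]
  rw [h3] at this
  exact this.symm

variable {N C A M : Type} [Group N] [Group C] [Group A] [AddCommGroup M] [Module ℂ M]

theorem snd_mor (ρ : Rp A M) (f : N →* C) :
    IsMor (ρ.comp (MonoidHom.snd C A)) (ρ.comp (MonoidHom.snd N A))
      (f.prodMap (MonoidHom.id A)) LinearMap.id := fun _ _ => rfl

/-- `f` acts like the trivial map in degrees up to `j`. -/
def ZP (f : N →* C) (j : ℕ) : Prop :=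
  ∀ (A : Type) [Group A] (M : Type) [AddCommGroup M] [Module ℂ M] (ρ : Rp A M) (i : ℕ), i ≤ j →
    ∀ y : H (ρ.comp (MonoidHom.snd C A)) i,
      Hmap i _ _ (snd_mor ρ f) y = Hmap i _ _ (snd_mor ρ (1 : N →* C)) y

theorem ZP_step {C' : Type} [Group C'] (f : N →* C) (j : ℕ) (hf : ZP f j) (μ : C × C →* C')
    (u : C') (hu : ∀ c, μ (c, c) = u * μ (1, c) * u⁻¹) :
    ZP ((μ.comp (MonoidHom.inl C C)).comp f) (j + 1) := by
  intro A _ M _ _ ρ i hi y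
  cases i with
  | zero => exact Hmap_zero_eq _ _ _
  | succ i =>
    let aD : C × A →* Equiv.Perm C := (lm C).comp (MonoidHom.fst C A)
    let ρ' : Rp (C × A) M := ρ.comp (MonoidHom.snd C A)
    let m : C × (C × A) →* C' × A :=
      (μ.comp ((MonoidHom.fst C (C × A)).prod ((MonoidHom.fst C A).comp (MonoidHom.snd _ _)))).prod
        ((MonoidHom.snd C A).comp (MonoidHom.snd _ _))
    let σP : Rp (C × (C × A)) M := ρ'.comp (MonoidHom.snd _ _)
    have hm : IsMor (ρ.comp (MonoidHom.snd C' A)) σP m LinearMap.id := fun _ _ => rfl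
    let in1 : C × A →* C × (C × A) :=
      (MonoidHom.fst C A).prod ((1 : C × A →* C).prod (MonoidHom.snd C A))
    let pr1 : C × (C × A) →* C × A :=
      (MonoidHom.fst C (C × A)).prod ((MonoidHom.snd C A).comp (MonoidHom.snd _ _))
    have hin1 : IsMor σP ρ' in1 LinearMap.id := fun _ _ => rfl
    have hpr1 : IsMor ρ' σP pr1 LinearMap.id := fun _ _ => rfl
    let y' := Hmap (i + 1) _ _ hm y
    let α := Hmap (i + 1) _ _ hin1 y'
    let d := y' - Hmap (i + 1) _ _ hpr1 α
    have hd : Hmap (i + 1) _ _ hin1 d = 0 := by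
      rw [map_sub, sub_eq_zero]
      exact ((Hmap_comp _ hin1 hpr1 α).trans (Hmap_id' _ _ rfl rfl α)).symm
    have hc := shapiro_cst (aD.comp (MonoidHom.snd C (C × A))) 1 in1
      (fun a b h => Prod.ext (congrArg (fun x : C × (C × A) => x.1) h)
        (congrArg (fun x : C × (C × A) => x.2.2) h))
      (fun s => mul_one (1 : C))
      (fun k hk => ⟨(k.1, k.2.2), Prod.ext rfl (Prod.ext
        (by have : k.2.1 * 1 = 1 := hk
            rw [mul_one] at this; exact this.symm) rfl)⟩)
      (fun y => ⟨(1, (y, 1)), mul_one y⟩) hin1 d hd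
    obtain ⟨y'', hy''⟩ := (cSES (aD.comp (MonoidHom.snd C (C × A))) σP).L1 i d hc
    have key : Hmap (i + 1) _ _ (snd_mor ρ' f) d = Hmap (i + 1) _ _ (snd_mor ρ' (1 : N →* C)) d := by
      rw [← hy'']
      rw [cSES_nat (a := aD.comp (MonoidHom.snd N (C × A))) (j := id) (fun _ _ => rfl)
        (snd_mor ρ' f),
        cSES_nat (a := aD.comp (MonoidHom.snd N (C × A))) (j := id) (fun _ _ => rfl)
        (snd_mor ρ' (1 : N →* C))]
      congr 1
      have h0 := hf (C × A) (QM C M) (QRep aD ρ') i (by omega) y''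
      have e : qpull (id : C → C) (LinearMap.id : M →ₗ[ℂ] M) = LinearMap.id := by
        apply LinearMap.ext; intro q
        obtain ⟨w, rfl⟩ := qmk_surj q
        rfl
      exact ((Hmap_congr i _ _ rfl e y'').trans h0).trans (Hmap_congr i _ _ rfl e y'').symm
    let k1 : N × A →* N × (C × A) := (MonoidHom.fst N A).prod (f.prodMap (MonoidHom.id A))
    have hk1 : IsMor (ρ'.comp (MonoidHom.snd N (C × A))) (ρ.comp (MonoidHom.snd N A)) k1
      LinearMap.id := fun _ _ => rfl
    have key2 := congrArg (Hmap (i + 1) _ _ hk1) key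
    have hα : ∀ (g : N →* C), Hmap (i + 1) _ _ hk1 (Hmap (i + 1) _ _ (snd_mor ρ' g)
        (Hmap (i + 1) _ _ hpr1 α)) =
        Hmap (i + 1) _ _ (snd_mor ρ ((μ.comp (MonoidHom.inl C C)).comp g)) y := by
      intro g
      simp only [α, y']
      rw [Hmap_comp, Hmap_comp, Hmap_comp, Hmap_comp]
      rfl
    have hone : (μ.comp (MonoidHom.inl C C)).comp (1 : N →* C) = 1 := by
      ext n; simp
    rw [map_sub, map_sub, map_sub, map_sub, hα, hα] at key2
    simp only [hone] at key2
    have hcj : Hmap (i + 1) _ _ hk1 (Hmap (i + 1) _ _ (snd_mor ρ' f) y') =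
        Hmap (i + 1) _ _ hk1 (Hmap (i + 1) _ _ (snd_mor ρ' (1 : N →* C)) y') := by
      simp only [y']
      rw [Hmap_comp, Hmap_comp, Hmap_comp, Hmap_comp]
      symm
      refine conj_eq _ _ ((u, 1) : C' × A) ?_ ?_ _ _ y
      · intro m
        change ρ (1 : A)⁻¹ m = m
        simp
      · rintro ⟨n, a⟩
        refine Prod.ext (hu (f n)) ?_
        change a = 1 * a * 1⁻¹
        simp
    rw [hcj] at key2
    exact sub_right_injective key2

theorem exists_ZP (N : Type) [Group N] (J : ℕ) : ∃ (C : Type) (_ : Group C) (f : N →* C),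
    Function.Injective f ∧ ZP f J := by
  induction J with
  | zero =>
    refine ⟨N, inferInstance, MonoidHom.id N, fun _ _ h => h, ?_⟩
    intro A _ M _ _ ρ i hi y
    obtain rfl : i = 0 := by omega
    exact Hmap_zero_eq _ _ _
  | succ J ih =>
    obtain ⟨C, _, f, hf, hz⟩ := ih
    obtain ⟨C', _, μ, u, hμ, hu⟩ := exists_swindle C
    refine ⟨C', inferInstance, _, ?_, ZP_step f J hz μ u hu⟩
    exact (hμ.comp (fun a b h => congrArg Prod.fst h)).comp hf

end swindle

section tree

/-- A tree with vertices `Y` and edges `E`. -/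
structure Tree {K Y E : Type} [Group K] (aY : K →* Equiv.Perm Y) (aE : K →* Equiv.Perm E) where
  h : E → Y
  t : E → Y
  hh : ∀ k e, h (aE k e) = aY k (h e)
  ht : ∀ k e, t (aE k e) = aY k (t e)
  ne : Nonempty Y
  conn : ∀ (M : Type) [AddCommGroup M] [Module ℂ M] (u : Y → M), (∀ e, u (h e) = u (t e)) →
    ∃ m, u = fun _ => m
  lift : ∀ (M : Type) [AddCommGroup M] [Module ℂ M] (w : E → M), ∃ u : Y → M,
    ∀ e, u (h e) - u (t e) = w e

variable {K K' Y E M : Type} [Group K] [Group K'] [AddCommGroup M] [Module ℂ M]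
  {aY : K →* Equiv.Perm Y} {aE : K →* Equiv.Perm E}

def Tree.comp (T : Tree aY aE) (g : K' →* K) : Tree (aY.comp g) (aE.comp g) where
  h := T.h
  t := T.t
  hh := fun k e => T.hh (g k) e
  ht := fun k e => T.ht (g k) e
  ne := T.ne
  conn := T.conn
  lift := T.lift

theorem id_mor (σ : Rp K M) : IsMor σ σ (MonoidHom.id K) LinearMap.id := fun _ _ => rfl

theorem IsMor.sub {K' M' : Type} [Group K'] [AddCommGroup M'] [Module ℂ M'] {ρ : Rp K M}
    {ρ' : Rp K' M'} {f : K →* K'} {φ φ' : M' →ₗ[ℂ] M} (h : IsMor ρ' ρ f φ) (h' : IsMor ρ' ρ f φ') :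
    IsMor ρ' ρ f (φ - φ') := by
  intro k m
  rw [LinearMap.sub_apply, LinearMap.sub_apply, h, h', map_sub]

theorem IsMor.add {K' M' : Type} [Group K'] [AddCommGroup M'] [Module ℂ M'] {ρ : Rp K M}
    {ρ' : Rp K' M'} {f : K →* K'} {φ φ' : M' →ₗ[ℂ] M} (h : IsMor ρ' ρ f φ) (h' : IsMor ρ' ρ f φ') :
    IsMor ρ' ρ f (φ + φ') := by
  intro k m
  rw [LinearMap.add_apply, LinearMap.add_apply, h, h', map_add]

def Tree.ses (T : Tree aY aE) (σ : Rp K M) : SES σ (funRep aY σ) (funRep aE σ) where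
  ι := cst Y M
  π := pull T.h LinearMap.id - pull T.t LinearMap.id
  hι := cst_mor aY σ
  hπ := IsMor.sub (pull_mor T.hh (id_mor σ)) (pull_mor T.ht (id_mor σ))
  inj := fun m m' h => congrFun h T.ne.some
  surj := fun w => by
    obtain ⟨u, hu⟩ := T.lift M w
    exact ⟨u, funext hu⟩
  comp := fun m => by
    funext e; exact sub_self m
  exact := fun u h => by
    obtain ⟨m, rfl⟩ := T.conn M u (fun e => sub_eq_zero.1 (congrFun h e))
    exact ⟨m, rfl⟩

/-- Classes which die on vertices have trivial boundary. -/
theorem tree_zero {F Q : Type} [AddCommGroup F] [Module ℂ F] [AddCommGroup Q] [Module ℂ Q]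
    {σM : Rp K M} {σF : Rp K F} {σQ : Rp K Q} (T : Tree aY aE) (S : SES σM σF σQ)
    (τ : E → (Q →ₗ[ℂ] F)) (hτ : ∀ e q, S.π (τ e q) = q)
    (hτ' : ∀ k e q, τ (aE k e) (σQ k q) = σF k (τ e q)) (m : ℕ) (z : H σQ m)
    (hz : Hmap m _ _ (cst_mor aY σQ) z = 0) : S.δ m z = 0 := by
  cases m with
  | zero =>
    rw [(T.ses σQ).L0 z hz, map_zero]
  | succ m =>
    obtain ⟨w, rfl⟩ := (T.ses σQ).L1 m z hz
    let τE : (E → Q) →ₗ[ℂ] (E → F) :=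
      { toFun := fun w e => τ e (w e)
        map_add' := fun _ _ => by funext e; simp
        map_smul' := fun _ _ => by funext e; simp }
    have hτE : IsMor (funRep aE σQ) (funRep aE σF) (MonoidHom.id K) τE := by
      intro k w
      funext e
      change τ e (σQ k (w ((aE k)⁻¹ e))) = σF k (τ ((aE k)⁻¹ e) (w ((aE k)⁻¹ e)))
      rw [← hτ']; simp
    have h1 : w = Hmap m _ _ (funSES aE S).hπ (Hmap m _ _ hτE w) := by
      rw [Hmap_comp, Hmap_id']
      · rfl
      · apply LinearMap.ext; intro w
        funext e
        exact hτ e (w e)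
    have h2 := SES.δ_nat (T.ses σF) (T.ses σQ) (MonoidHom.id K) S.π (pull id S.π) (pull id S.π)
      S.hπ (funSES aY S).hπ (funSES aE S).hπ (fun _ => rfl) (fun u => by
        funext e
        exact map_sub S.π _ _) m (Hmap m _ _ hτE w)
    rw [show Hmap m (MonoidHom.id K) (pull id S.π) (funSES aE S).hπ (Hmap m _ _ hτE w) = w from
      h1.symm] at h2
    rw [← h2]
    exact S.L3 _ _

/-- the section of `Fun(X,M) → Q` attached to a point -/
def sec (M : Type) [AddCommGroup M] [Module ℂ M] {X : Type} (x : X) : QM X M →ₗ[ℂ] (X → M) :=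
  qlift (LinearMap.id - (cst X M).comp (ev x LinearMap.id)) (fun m => by
    funext y; exact sub_self m)

theorem sec_qmk {X : Type} (x : X) (u : X → M) : sec M x (qmk X M u) = fun y => u y - u x := rfl

theorem qmk_sec {X : Type} (x : X) (q : QM X M) : qmk X M (sec M x q) = q := by
  obtain ⟨u, rfl⟩ := qmk_surj q
  rw [sec_qmk, ← sub_eq_zero, ← map_sub, qmk_eq_zero]
  refine ⟨- u x, ?_⟩
  funext y
  rw [Pi.sub_apply]; abel

theorem sec_mor {X : Type} (a : K →* Equiv.Perm X) (ρ : Rp K M) (k x) (q : QM X M) :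
    sec M (a k x) (QRep a ρ k q) = funRep a ρ k (sec M x q) := by
  obtain ⟨u, rfl⟩ := qmk_surj q
  rw [QRep_qmk, sec_qmk, sec_qmk]
  funext y
  rw [funRep_apply, funRep_apply, funRep_apply, map_sub]
  simp

end tree

section SP

/-- `Γ × A` acting on `Γ`. -/
def aL (Γ A : Type) [Group Γ] [Group A] : Γ × A →* Equiv.Perm Γ :=
  (lm Γ).comp (MonoidHom.fst Γ A)

theorem aL_apply {Γ A : Type} [Group Γ] [Group A] (k : Γ × A) (x : Γ) :
    aL Γ A k x = k.1 * x := rfl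

variable {G G' Γ : Type} [Group G] [Group G'] [Group Γ]

def SP (f : G →* Γ) (p J : ℕ) : Prop :=
  ∀ (A : Type) [Group A] (M : Type) [AddCommGroup M] [Module ℂ M] (ρ : Rp (Γ × A) M) (n : ℕ),
    n ≤ J → ∀ y : H ρ n,
      Hmap n _ _ (isMor_res ρ (f.prodMap (MonoidHom.id A))) y = 0 ↔ Fil (aL Γ A) p n ρ y

/-- Classes vanishing on `A` are boundaries. -/
theorem exists_bdry {A M : Type} [Group A] [AddCommGroup M] [Module ℂ M] {ρ : Rp (Γ × A) M}
    {n : ℕ} (y : H ρ n) (hy : Hmap n _ _ (isMor_res ρ (MonoidHom.inr Γ A)) y = 0) :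
    Hmap n _ _ (cst_mor (aL Γ A) ρ) y = 0 := by
  refine shapiro_cst (aL Γ A) 1 (MonoidHom.inr Γ A)
      (fun a b h => congrArg Prod.snd h)
      (fun s => mul_one (1 : Γ))
      (fun k hk => ⟨k.2, Prod.ext
        (by have : k.1 * 1 = 1 := hk
            rw [mul_one] at this; exact this.symm) rfl⟩)
      (fun y => ⟨(y, 1), mul_one y⟩) (isMor_res _ _) y hy

theorem Fil_one {A M : Type} [Group A] [AddCommGroup M] [Module ℂ M] {ρ : Rp (Γ × A) M}
    {n : ℕ} (y : H ρ n) (hy : Hmap n _ _ (isMor_res ρ (MonoidHom.inr Γ A)) y = 0) :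
    Fil (aL Γ A) 1 n ρ y := by
  have h := exists_bdry y hy
  cases n with
  | zero => exact (cSES (aL Γ A) ρ).L0 y h
  | succ n =>
    obtain ⟨z, rfl⟩ := (cSES (aL Γ A) ρ).L1 n y h
    exact ⟨z, trivial, rfl⟩

theorem SP_one (Γ : Type) [Group Γ] (J : ℕ) : SP (1 : Unit →* Γ) 1 J := by
  intro A _ M _ _ ρ n hn y
  constructor
  · intro h
    apply Fil_one
    exact Hmap_zero_of n (isMor_res (ρ.comp ((1 : Unit →* Γ).prodMap (MonoidHom.id A)))
      (MonoidHom.inr Unit A)) (isMor_res ρ _) _ (fun _ => rfl) (fun _ => rfl) y h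
  · intro h
    exact Fil_res (y0 := 1) (fun s => mul_one (1 : Γ)) (isMor_res ρ _) y h

/-- spreading out an element -/
def psi {Γ A M : Type} [Group Γ] [Group A] [AddCommGroup M] [Module ℂ M] (ρ : Rp (Γ × A) M) :
    M →ₗ[ℂ] (Γ → M) where
  toFun m := fun x => ρ (x, 1) m
  map_add' _ _ := by funext x; simp
  map_smul' _ _ := by funext x; simp

theorem psi_mor {Γ A M : Type} [Group Γ] [Group A] [AddCommGroup M] [Module ℂ M]
    (ρ : Rp (Γ × A) M) :
    IsMor (ρ.comp (MonoidHom.inr Γ A)) (funRep (aL Γ A) ρ) (MonoidHom.snd Γ A) (psi ρ) := by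
  rintro ⟨g, a⟩ m
  funext x
  change ρ (x, 1) (ρ (1, a) m) = ρ (g, a) (ρ (((aL Γ A (g, a))⁻¹) x, 1) m)
  rw [← Module.End.mul_apply, ← map_mul, ← Module.End.mul_apply, ← map_mul, ← map_inv, aL_apply]
  simp

/-- The common part of the construction of groups with `SP`. -/
theorem SP_succ {f : G →* Γ} {f' : G' →* Γ} {g : G →* G'} (hg : ∀ x, f' (g x) = f x)
    {p J : ℕ} (hf : SP f p J)
    (HU : ∀ (A : Type) [Group A] (M : Type) [AddCommGroup M] [Module ℂ M] (ρ : Rp (Γ × A) M)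
      (n : ℕ), n ≤ J →
      ∀ v : H ((funRep (aL Γ A) ρ).comp (f'.prodMap (MonoidHom.id A))) n,
      ∀ h1 : IsMor ((funRep (aL Γ A) ρ).comp (f'.prodMap (MonoidHom.id A)))
        (ρ.comp (MonoidHom.inr Γ A)) (MonoidHom.inr G' A) (ev 1 LinearMap.id),
      ∀ h2 : IsMor ((funRep (aL Γ A) ρ).comp (f'.prodMap (MonoidHom.id A)))
        ((funRep (aL Γ A) ρ).comp (f.prodMap (MonoidHom.id A)))
        (g.prodMap (MonoidHom.id A)) LinearMap.id,
      Hmap n _ _ h1 v = 0 → Hmap n _ _ h2 v = 0)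
    {Y E : Type} {aY : G' →* Equiv.Perm Y} {aE : G' →* Equiv.Perm E} (T : Tree aY aE)
    (θ : E → Γ) (hθ : ∀ k e, θ (aE k e) = f' k * θ e)
    (HT : ∀ (A : Type) [Group A] (M : Type) [AddCommGroup M] [Module ℂ M] (ρ : Rp (Γ × A) M)
      (n : ℕ), n ≤ J → ∀ z : H ρ n, Fil (aL Γ A) p n ρ z →
      Hmap n _ _ (cst_mor (aY.comp (MonoidHom.fst G' A))
        (ρ.comp (f'.prodMap (MonoidHom.id A))))
        (Hmap n _ _ (isMor_res ρ (f'.prodMap (MonoidHom.id A))) z) = 0) :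
    SP f' (p + 1) J := by
  intro A _ M _ _ ρ n hn y
  constructor
  · intro h
    cases n with
    | zero =>
      obtain ⟨m, hm, rfl⟩ := H0_surj y
      rw [Hmap_H0, H0_eq_zero] at h
      change H0 ρ m hm = 0
      rw [H0_eq_zero]; exact h
    | succ n =>
      have hA : Hmap (n + 1) _ _ (isMor_res ρ (MonoidHom.inr Γ A)) y = 0 := by
        refine Hmap_zero_of (n + 1)
          (f := MonoidHom.inr G' A) (φ := LinearMap.id) ?_ (isMor_res ρ _) _ ?_ ?_ y h
        · intro a m
          change ρ (f' 1, a) m = ρ (1, a) m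
          rw [map_one]
        · intro a
          exact Prod.ext (map_one f') rfl
        · intro m; rfl
      obtain ⟨z, rfl⟩ := (cSES (aL Γ A) ρ).L1 n y (exists_bdry y hA)
      have h' := h
      rw [show Hmap (n + 1) _ _ (isMor_res ρ (f'.prodMap (MonoidHom.id A)))
        ((cSES (aL Γ A) ρ).δ n z) = _ from (cSES (aL Γ A) ρ).δ_res _ n z] at h'
      obtain ⟨u, hu⟩ := ((cSES (aL Γ A) ρ).res (f'.prodMap (MonoidHom.id A))).L2 n _ h'
      have h1 : IsMor ((funRep (aL Γ A) ρ).comp (f'.prodMap (MonoidHom.id A)))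
        (ρ.comp (MonoidHom.inr Γ A)) (MonoidHom.inr G' A) (ev 1 LinearMap.id) := by
        intro a w
        change ρ (f' 1, a) (w ((aL Γ A (f' 1, a))⁻¹ 1)) = ρ (1, a) (w 1)
        rw [← map_inv, aL_apply, map_one]; simp
      let u0 : H (funRep (aL Γ A) ρ) n := Hmap n _ _ (psi_mor ρ) (Hmap n _ _ h1 u)
      let r := isMor_res (funRep (aL Γ A) ρ) (f'.prodMap (MonoidHom.id A))
      have hv : Hmap n _ _ h1 (u - Hmap n _ _ r u0) = 0 := by
        rw [map_sub, sub_eq_zero]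
        symm
        refine (Hmap_comp n h1 r u0).trans ((Hmap_comp n _ (psi_mor ρ) _).trans ?_)
        apply Hmap_id'
        · rfl
        · apply LinearMap.ext; intro m
          change ρ (1, 1) m = m
          rw [← Prod.one_eq_mk, map_one]; rfl
      have h2 : IsMor ((funRep (aL Γ A) ρ).comp (f'.prodMap (MonoidHom.id A)))
        ((funRep (aL Γ A) ρ).comp (f.prodMap (MonoidHom.id A)))
        (g.prodMap (MonoidHom.id A)) LinearMap.id := by
        rintro ⟨x, a⟩ w
        change funRep (aL Γ A) ρ (f' (g x), a) w = funRep (aL Γ A) ρ (f x, a) w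
        rw [hg]
      have hv2 := HU A M ρ n (by omega) _ h1 h2 hv
      let z' := z - Hmap n _ _ (cSES (aL Γ A) ρ).hπ u0
      have hδ : (cSES (aL Γ A) ρ).δ n z' = (cSES (aL Γ A) ρ).δ n z := by
        rw [map_sub, SES.L3, sub_zero]
      refine ⟨z', ?_, hδ⟩
      rw [← hf A _ _ n (by omega)]
      have h3 : IsMor ((QRep (aL Γ A) ρ).comp (f'.prodMap (MonoidHom.id A)))
        ((QRep (aL Γ A) ρ).comp (f.prodMap (MonoidHom.id A)))
        (g.prodMap (MonoidHom.id A)) LinearMap.id := by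
        rintro ⟨x, a⟩ w
        change QRep (aL Γ A) ρ (f' (g x), a) w = QRep (aL Γ A) ρ (f x, a) w
        rw [hg]
      have h4 : Hmap n _ _ (isMor_res (QRep (aL Γ A) ρ) (f'.prodMap (MonoidHom.id A))) z' =
          Hmap n _ _ ((cSES (aL Γ A) ρ).res (f'.prodMap (MonoidHom.id A))).hπ
            (u - Hmap n _ _ r u0) := by
        rw [map_sub, map_sub, hu]
        congr 1
        exact Hmap_sq n (isMor_res (QRep (aL Γ A) ρ) (f'.prodMap (MonoidHom.id A)))
          (cSES (aL Γ A) ρ).hπ ((cSES (aL Γ A) ρ).res (f'.prodMap (MonoidHom.id A))).hπ r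
          (fun _ => rfl) (fun _ => rfl) u0
      rw [← Hmap_tri n h3 (isMor_res (QRep (aL Γ A) ρ) (f'.prodMap (MonoidHom.id A)))
        (isMor_res (QRep (aL Γ A) ρ) (f.prodMap (MonoidHom.id A)))
        (fun x => Prod.ext (hg x.1) rfl) (fun _ => rfl), h4,
        Hmap_sq n h3 ((cSES (aL Γ A) ρ).res (f'.prodMap (MonoidHom.id A))).hπ
        ((cSES (aL Γ A) ρ).res (f.prodMap (MonoidHom.id A))).hπ h2
          (fun _ => rfl) (fun _ => rfl), hv2, map_zero]
  · intro h
    cases n with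
    | zero =>
      have h : y = 0 := h
      rw [h, map_zero]
    | succ n =>
      obtain ⟨z, hz, rfl⟩ := h
      rw [show Hmap (n + 1) _ _ (isMor_res ρ (f'.prodMap (MonoidHom.id A)))
        ((cSES (aL Γ A) ρ).δ n z) = _ from (cSES (aL Γ A) ρ).δ_res _ n z]
      refine tree_zero (T.comp (MonoidHom.fst G' A)) _ (fun e => sec M (θ e)) (fun e q => qmk_sec _ q)
        (fun k e q => ?_) n _ (HT A _ _ n (by omega) z hz)
      have := sec_mor (aL Γ A) ρ (f'.prodMap (MonoidHom.id A) k) (θ e) q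
      rw [aL_apply] at this
      change sec M (θ (aE k.1 e)) _ = _
      rw [hθ]
      exact this

end SP

section amalg

def BF (G C : Type) : Bool → Type
  | false => G
  | true => C

instance instGroupBF (G C : Type) [Group G] [Group C] : ∀ b, Group (BF G C b)
  | false => inferInstanceAs (Group G)
  | true => inferInstanceAs (Group C)

theorem exists_amalg {N G C : Type} [Group N] [Group G] [Group C] (i : N →* G) (j : N →* C)
    (hi : Function.Injective i) (hj : Function.Injective j) :
    ∃ (P : Type) (_ : Group P) (g : G →* P) (c : C →* P), Function.Injective g ∧
      Function.Injective c ∧ (∀ n, g (i n) = c (j n)) ∧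
      (∀ (L : Type) [Group L] (a : G →* L) (b : C →* L), (∀ n, a (i n) = b (j n)) →
        ∃ l : P →* L, (∀ x, l (g x) = a x) ∧ ∀ x, l (c x) = b x) ∧
      (∀ S : Subgroup P, (∀ x, g x ∈ S) → (∀ x, c x ∈ S) → ∀ x, x ∈ S) := by
  let φ : ∀ b, N →* BF G C b := fun b => match b with
    | false => i
    | true => j
  have hφ : ∀ b, Function.Injective (φ b) := fun b => match b with
    | false => hi
    | true => hj
  let g : G →* Monoid.PushoutI φ := Monoid.PushoutI.of (φ := φ) false
  let c : C →* Monoid.PushoutI φ := Monoid.PushoutI.of (φ := φ) true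
  have hgb : ∀ n, g (i n) = Monoid.PushoutI.base φ n :=
    fun n => Monoid.PushoutI.of_apply_eq_base φ false n
  have hcb : ∀ n, c (j n) = Monoid.PushoutI.base φ n :=
    fun n => Monoid.PushoutI.of_apply_eq_base φ true n
  refine ⟨Monoid.PushoutI φ, inferInstance, g, c,
    Monoid.PushoutI.of_injective hφ false, Monoid.PushoutI.of_injective hφ true,
    fun n => (hgb n).trans (hcb n).symm, ?_, ?_⟩
  · intro L _ a b hab
    let F : ∀ b, BF G C b →* L := fun x => match x with
      | false => a
      | true => b
    refine ⟨Monoid.PushoutI.lift (φ := φ) F (a.comp i) ?_, ?_, ?_⟩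
    · rintro (_ | _)
      · rfl
      · exact MonoidHom.ext fun n => (hab n).symm
    · intro x
      exact Monoid.PushoutI.lift_of (φ := φ) F (a.comp i) _ (i := false) x
    · intro x
      exact Monoid.PushoutI.lift_of (φ := φ) F (a.comp i) _ (i := true) x
  · intro S hg hc x
    refine Monoid.PushoutI.induction_on x ?_ ?_ ?_
    · rintro (_ | _) y
      · exact hg y
      · exact hc y
    · intro n
      rw [← hgb]; exact hg _
    · intro x y; exact S.mul_mem

end amalg

section walk

variable {P M : Type} [Group P] [AddCommGroup M] [Module ℂ M]

def walkSub (γ : P →* Equiv.Perm (P × M)) : Subgroup P where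
  carrier := {y | ∀ q, (γ y q).1 = q.1 * y⁻¹}
  one_mem' := fun q => by simp
  mul_mem' := fun {a b} ha hb q => by
    rw [map_mul, Equiv.Perm.mul_apply, ha, hb, mul_inv_rev, mul_assoc]
  inv_mem' := fun {a} ha q => by
    have := ha (γ a⁻¹ q)
    rw [← Equiv.Perm.mul_apply, ← map_mul, mul_inv_cancel, map_one, Equiv.Perm.one_apply] at this
    rw [this]; simp

def walkU (γ : P →* Equiv.Perm (P × M)) (p : P) : M := (γ p⁻¹ (1, 0)).2

theorem walk_step (γ : P →* Equiv.Perm (P × M)) (h : ∀ y, y ∈ walkSub γ) (p y : P) :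
    walkU γ (p * y) = (γ y⁻¹ (p, walkU γ p)).2 := by
  unfold walkU
  rw [mul_inv_rev, map_mul, Equiv.Perm.mul_apply]
  congr 2
  refine Prod.ext ?_ rfl
  rw [h p⁻¹]; simp

end walk

section trees

variable {Γ : Type}

def aFE (Γ : Type) : FreeGroup Γ →* Equiv.Perm (FreeGroup Γ × Γ) where
  toFun k :=
    { toFun := fun e => (k * e.1, e.2)
      invFun := fun e => (k⁻¹ * e.1, e.2)
      left_inv := fun e => by simp
      right_inv := fun e => by simp }
  map_one' := by ext e <;> simp
  map_mul' k l := by ext e <;> simp [mul_assoc]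

def freeTree (Γ : Type) : Tree (lm (FreeGroup Γ)) (aFE Γ) where
  h e := e.1 * FreeGroup.of e.2
  t e := e.1
  hh k e := mul_assoc _ _ _
  ht k e := rfl
  ne := ⟨1⟩
  conn := by
    intro M _ _ u hu
    let S : Subgroup (FreeGroup Γ) :=
      { carrier := {y | ∀ x, u (x * y) = u x}
        one_mem' := fun x => by rw [mul_one]
        mul_mem' := fun {a b} ha hb x => by rw [← mul_assoc, hb, ha]
        inv_mem' := fun {a} ha x => by
          have := ha (x * a⁻¹)
          rw [inv_mul_cancel_right] at this
          exact this.symm }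
    have hS : S = ⊤ := by
      rw [← top_le_iff, ← FreeGroup.closure_range_of, Subgroup.closure_le]
      rintro _ ⟨s, rfl⟩ x
      exact hu (x, s)
    refine ⟨u 1, funext fun x => ?_⟩
    have : x ∈ S := by rw [hS]; trivial
    have := this 1
    rwa [one_mul] at this
  lift := by
    intro M _ _ w
    let γ : FreeGroup Γ →* Equiv.Perm (FreeGroup Γ × M) := FreeGroup.lift fun s =>
      { toFun := fun q => (q.1 * (FreeGroup.of s)⁻¹, q.2 - w (q.1 * (FreeGroup.of s)⁻¹, s))
        invFun := fun q => (q.1 * FreeGroup.of s, q.2 + w (q.1, s))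
        left_inv := fun q => by simp
        right_inv := fun q => by simp }
    have hS : walkSub γ = ⊤ := by
      rw [← top_le_iff, ← FreeGroup.closure_range_of, Subgroup.closure_le]
      rintro _ ⟨s, rfl⟩ x
      simp only [γ, FreeGroup.lift_apply_of]; rfl
    refine ⟨walkU γ, fun e => ?_⟩
    rw [walk_step γ (fun y => by rw [hS]; trivial), map_inv]
    have : γ (FreeGroup.of e.2) = _ := FreeGroup.lift_apply_of
    rw [this]
    change walkU γ e.1 + w (e.1, e.2) - walkU γ e.1 = w e
    simp

variable {N P G C : Type} [Group N] [Group P] [Group G] [Group C]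

def aSum (H₁ H₂ : Subgroup P) : P →* Equiv.Perm ((P ⧸ H₁) ⊕ (P ⧸ H₂)) :=
  (Equiv.Perm.sumCongrHom _ _).comp
    ((MulAction.toPermHom P (P ⧸ H₁)).prod (MulAction.toPermHom P (P ⧸ H₂)))

/-- right multiplication with a twist -/
def twist {D M : Type} [Group D] [AddCommGroup M] (c : D →* P) (w : P → M) :
    D →* Equiv.Perm (P × M) where
  toFun d :=
    { toFun := fun q => (q.1 * (c d)⁻¹, q.2 + w (q.1 * (c d)⁻¹) - w q.1)
      invFun := fun q => (q.1 * c d, q.2 + w (q.1 * c d) - w q.1)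
      left_inv := fun q => by simp
      right_inv := fun q => by simp }
  map_one' := by ext q <;> simp
  map_mul' a b := by
    apply Equiv.ext
    intro q
    refine Prod.ext ?_ ?_
    · simp [mul_assoc]
    · simp [mul_assoc]
      abel

theorem twist_apply {D M : Type} [Group D] [AddCommGroup M] (c : D →* P) (w : P → M) (d : D)
    (q : P × M) : twist c w d q = (q.1 * (c d)⁻¹, q.2 + w (q.1 * (c d)⁻¹) - w q.1) := rfl

def amalgTree (g : G →* P) (c : C →* P) (i : N →* G) (j : N →* C) (hij : ∀ n, g (i n) = c (j n))
    (hl : ∀ (L : Type) [Group L] (a : G →* L) (b : C →* L), (∀ n, a (i n) = b (j n)) →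
        ∃ l : P →* L, (∀ x, l (g x) = a x) ∧ ∀ x, l (c x) = b x)
    (hgen : ∀ S : Subgroup P, (∀ x, g x ∈ S) → (∀ x, c x ∈ S) → ∀ x, x ∈ S) :
    Tree (aSum g.range c.range) (MulAction.toPermHom P (P ⧸ (g.comp i).range)) where
  h := fun e => Sum.inl (Quotient.lift (fun p : P => (QuotientGroup.mk p : P ⧸ g.range))
    (fun a b hab => by
      rw [← Quotient.eq_iff_equiv] at hab
      have hab := QuotientGroup.eq.1 hab
      obtain ⟨n, hn⟩ := hab
      exact QuotientGroup.eq.2 ⟨i n, hn⟩) e)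
  t := fun e => Sum.inr (Quotient.lift (fun p : P => (QuotientGroup.mk p : P ⧸ c.range))
    (fun a b hab => by
      rw [← Quotient.eq_iff_equiv] at hab
      have hab := QuotientGroup.eq.1 hab
      obtain ⟨n, hn⟩ := hab
      exact QuotientGroup.eq.2 ⟨j n, (hij n).symm.trans hn⟩) e)
  hh := by
    intro k e
    induction e using QuotientGroup.induction_on with
    | H p => rfl
  ht := by
    intro k e
    induction e using QuotientGroup.induction_on with
    | H p => rfl
  ne := ⟨Sum.inl (QuotientGroup.mk 1)⟩
  conn := by
    intro M _ _ u hu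
    have hu' : ∀ p : P, u (Sum.inl (QuotientGroup.mk p)) = u (Sum.inr (QuotientGroup.mk p)) :=
      fun p => hu (QuotientGroup.mk p)
    let v : P → M := fun p => u (Sum.inl (QuotientGroup.mk p))
    let S : Subgroup P :=
      { carrier := {y | ∀ x, v (x * y) = v x}
        one_mem' := fun x => by rw [mul_one]
        mul_mem' := fun {a b} ha hb x => by rw [← mul_assoc, hb, ha]
        inv_mem' := fun {a} ha x => by
          have := ha (x * a⁻¹)
          rw [inv_mul_cancel_right] at this
          exact this.symm }
    have hS := hgen S
      (fun y x => by
        change u (Sum.inl (QuotientGroup.mk (x * g y))) = u (Sum.inl (QuotientGroup.mk x))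
        congr 2
        rw [QuotientGroup.eq]
        exact ⟨y⁻¹, by simp⟩)
      (fun y x => by
        change u (Sum.inl (QuotientGroup.mk (x * c y))) = u (Sum.inl (QuotientGroup.mk x))
        rw [hu', hu']
        congr 2
        rw [QuotientGroup.eq]
        exact ⟨y⁻¹, by simp⟩)
    have hv : ∀ p, v p = v 1 := fun p => by
      have := hS p 1
      rwa [one_mul] at this
    refine ⟨v 1, funext fun y => ?_⟩
    rcases y with e | e
    · induction e using QuotientGroup.induction_on with
      | H p => exact hv p
    · induction e using QuotientGroup.induction_on with
      | H p => exact (hu' p).symm.trans (hv p)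
  lift := by
    intro M _ _ w
    let w' : P → M := fun p => w (QuotientGroup.mk p)
    have hw' : ∀ p n, w' (p * g (i n)) = w' p := by
      intro p n
      change w _ = w _
      congr 1
      rw [QuotientGroup.eq]
      exact ⟨n⁻¹, by simp⟩
    obtain ⟨γ, h1, h2⟩ := hl (Equiv.Perm (P × M)) (twist g (fun _ => 0)) (twist c w') (by
      intro n
      apply Equiv.ext
      intro q
      rw [twist_apply, twist_apply, ← hij, ← map_inv, ← map_inv, hw']
      refine Prod.ext rfl ?_
      simp)
    have hS := hgen (walkSub γ)
      (fun x q => by rw [h1]; rfl) (fun x q => by rw [h2]; rfl)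
    have hU : ∀ p x, walkU γ (p * g x) = walkU γ p := by
      intro p x
      rw [walk_step γ hS, ← map_inv, h1, twist_apply]
      simp
    have hV : ∀ p x, walkU γ (p * c x) - w' (p * c x) = walkU γ p - w' p := by
      intro p x
      rw [walk_step γ hS, ← map_inv, h2, twist_apply]
      simp only [map_inv, inv_inv]
      abel
    refine ⟨Sum.elim
      (Quotient.lift (fun p : P => walkU γ p) (fun a b hab => ?_))
      (Quotient.lift (fun p : P => walkU γ p - w' p) (fun a b hab => ?_)), fun e => ?_⟩
    · rw [← Quotient.eq_iff_equiv] at hab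
      have hab := QuotientGroup.eq.1 hab
      obtain ⟨n, hn⟩ := hab
      change walkU γ a = walkU γ b
      rw [← hU a n, hn]; simp
    · rw [← Quotient.eq_iff_equiv] at hab
      have hab := QuotientGroup.eq.1 hab
      obtain ⟨n, hn⟩ := hab
      change walkU γ a - w' a = walkU γ b - w' b
      rw [← hV a n, hn]; simp
    · induction e using QuotientGroup.induction_on with
      | H p =>
        change walkU γ p - (walkU γ p - w' p) = w' p
        simp

end trees

section SPex

variable {Γ : Type} [Group Γ]

theorem SP_free (Γ : Type) [Group Γ] (J : ℕ) : SP (FreeGroup.lift (id : Γ → Γ)) 2 J := by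
  set f' := FreeGroup.lift (id : Γ → Γ) with hf'
  have hof : ∀ s, f' (FreeGroup.of s) = s := fun s => FreeGroup.lift_apply_of
  refine SP_succ (f := (1 : Unit →* Γ)) (g := (1 : Unit →* FreeGroup Γ)) (fun _ => map_one f')
    (SP_one Γ J) ?_ (freeTree Γ) (fun e => f' e.1) (fun k e => map_mul f' k e.1) ?_
  · intro A _ M _ _ ρ n hn v h1 h2 hv
    let r := f'.prodMap (MonoidHom.id A)
    have hj : ∀ (k : FreeGroup Γ × A) (y : FreeGroup Γ),
        f' (aL (FreeGroup Γ) A k y) = (aL Γ A).comp r k (f' y) := fun k y => map_mul f' k.1 y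
    have hp : IsMor (funRep ((aL Γ A).comp r) (ρ.comp r)) (funRep (aL (FreeGroup Γ) A) (ρ.comp r))
      (MonoidHom.id _) (pull f' LinearMap.id) := pull_mor hj (id_mor _)
    have hσ : IsMor (ρ.comp r) (ρ.comp (MonoidHom.inr Γ A)) (MonoidHom.inr (FreeGroup Γ) A)
        LinearMap.id := by
      intro a m
      change ρ (f' 1, a) m = ρ (1, a) m
      rw [map_one]
    have hs : ∀ s, aL (FreeGroup Γ) A (MonoidHom.inr (FreeGroup Γ) A s) 1 = 1 :=
      fun s => mul_one (1 : FreeGroup Γ)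
    have hz : Hmap n _ _ hp v = 0 := by
      refine shapiro (aL (FreeGroup Γ) A) 1 (MonoidHom.inr (FreeGroup Γ) A)
        (fun a b h => congrArg Prod.snd h) hs
        (fun k hk => ⟨k.2, Prod.ext
          (by have : k.1 * 1 = 1 := hk
              rw [mul_one] at this; exact this.symm) rfl⟩)
        (fun y => ⟨(y, 1), mul_one y⟩) hσ _ ?_
      refine Eq.trans ?_ hv
      refine Hmap_tri n (ev_mor hs hσ) hp h1 (fun _ => rfl) (fun w => ?_) v
      change w (f' 1) = w 1
      rw [map_one]
    let i : Unit × A →* FreeGroup Γ × A := (1 : Unit →* FreeGroup Γ).prodMap (MonoidHom.id A)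
    refine Hmap_zero_of n (f := i) (φ := pull (fun x : Γ => FreeGroup.of x) LinearMap.id)
      ?_ hp h2 (fun _ => rfl) (fun w => ?_) v hz
    · rintro ⟨x, a⟩ w
      funext y
      change ρ (f' 1, a) (w ((aL (FreeGroup Γ) A (1, a))⁻¹ (FreeGroup.of y))) =
        ρ (1, a) (w (FreeGroup.of ((aL Γ A (1, a))⁻¹ y)))
      rw [map_one, ← map_inv, ← map_inv, aL_apply, aL_apply]
      simp
    · funext y
      change w (f' (FreeGroup.of y)) = w y
      rw [hof]
  · intro A _ M _ _ ρ n hn z hz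
    have hσ : IsMor (ρ.comp (f'.prodMap (MonoidHom.id A))) (ρ.comp (MonoidHom.inr Γ A))
        (MonoidHom.inr (FreeGroup Γ) A) LinearMap.id := by
      intro a m
      change ρ (f' 1, a) m = ρ (1, a) m
      rw [map_one]
    refine shapiro_cst ((lm (FreeGroup Γ)).comp (MonoidHom.fst _ A)) 1
      (MonoidHom.inr (FreeGroup Γ) A)
        (fun a b h => congrArg Prod.snd h) (fun s => mul_one (1 : FreeGroup Γ))
        (fun k hk => ⟨k.2, Prod.ext
          (by have : k.1 * 1 = 1 := hk
              rw [mul_one] at this; exact this.symm) rfl⟩)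
        (fun y => ⟨(y, 1), mul_one y⟩) hσ _ ?_
    refine (Hmap_tri n hσ (isMor_res ρ (f'.prodMap (MonoidHom.id A)))
      (isMor_res ρ (MonoidHom.inr Γ A)) (fun a => Prod.ext (map_one f') rfl) (fun _ => rfl) z).trans ?_
    exact Fil_res (y0 := 1) (fun s => mul_one (1 : Γ)) (isMor_res ρ _) z hz

theorem cst_sum {K Y₁ Y₂ M : Type} [Group K] [AddCommGroup M] [Module ℂ M]
    (a : K →* Equiv.Perm (Y₁ ⊕ Y₂)) (a₁ : K →* Equiv.Perm Y₁) (a₂ : K →* Equiv.Perm Y₂)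
    (h₁ : ∀ k y, a k (Sum.inl y) = Sum.inl (a₁ k y)) (h₂ : ∀ k y, a k (Sum.inr y) = Sum.inr (a₂ k y))
    {n : ℕ} {ρ : Rp K M} (u : H ρ n) (e₁ : Hmap n _ _ (cst_mor a₁ ρ) u = 0)
    (e₂ : Hmap n _ _ (cst_mor a₂ ρ) u = 0) : Hmap n _ _ (cst_mor a ρ) u = 0 := by
  let j₁ : (Y₁ → M) →ₗ[ℂ] (Y₁ ⊕ Y₂ → M) :=
    { toFun := fun u => Sum.elim u 0
      map_add' := fun u v => by funext y; rcases y with y | y <;> simp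
      map_smul' := fun c v => by funext y; rcases y with y | y <;> simp }
  let j₂ : (Y₂ → M) →ₗ[ℂ] (Y₁ ⊕ Y₂ → M) :=
    { toFun := fun u => Sum.elim 0 u
      map_add' := fun u v => by funext y; rcases y with y | y <;> simp
      map_smul' := fun c v => by funext y; rcases y with y | y <;> simp }
  have m₁ : IsMor (funRep a₁ ρ) (funRep a ρ) (MonoidHom.id K) j₁ := by
    intro k u
    funext y
    rcases y with y | y
    · change ρ k (u ((a₁ k)⁻¹ y)) = ρ k (Sum.elim u 0 ((a k)⁻¹ (Sum.inl y)))
      rw [← map_inv, ← map_inv, h₁]; rfl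
    · change 0 = ρ k (Sum.elim u 0 ((a k)⁻¹ (Sum.inr y)))
      rw [← map_inv, h₂]; exact (map_zero _).symm
  have m₂ : IsMor (funRep a₂ ρ) (funRep a ρ) (MonoidHom.id K) j₂ := by
    intro k u
    funext y
    rcases y with y | y
    · change 0 = ρ k (Sum.elim 0 u ((a k)⁻¹ (Sum.inl y)))
      rw [← map_inv, h₁]; exact (map_zero _).symm
    · change ρ k (u ((a₂ k)⁻¹ y)) = ρ k (Sum.elim 0 u ((a k)⁻¹ (Sum.inr y)))
      rw [← map_inv, ← map_inv, h₂]; rfl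
  have c₁ : IsMor ρ (funRep a ρ) (MonoidHom.id K) (j₁.comp (cst Y₁ M)) :=
    fun k m => (congrArg j₁ (cst_mor a₁ ρ k m)).trans (m₁ k _)
  have c₂ : IsMor ρ (funRep a ρ) (MonoidHom.id K) (j₂.comp (cst Y₂ M)) :=
    fun k m => (congrArg j₂ (cst_mor a₂ ρ k m)).trans (m₂ k _)
  have e : cst (Y₁ ⊕ Y₂) M = j₁.comp (cst Y₁ M) + j₂.comp (cst Y₂ M) := by
    apply LinearMap.ext; intro m
    funext y
    rcases y with y | y
    · change m = m + 0
      simp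
    · change m = 0 + m
      simp
  have z₁ : Hmap n _ _ c₁ u = 0 :=
    Hmap_zero_of n m₁ (cst_mor a₁ ρ) c₁ (fun _ => rfl) (fun _ => rfl) u e₁
  have z₂ : Hmap n _ _ c₂ u = 0 :=
    Hmap_zero_of n m₂ (cst_mor a₂ ρ) c₂ (fun _ => rfl) (fun _ => rfl) u e₂
  rw [Hmap_congr n _ (IsMor.add c₁ c₂) rfl e, Hmap_add_coef n c₁ c₂, z₁, z₂, add_zero]

theorem coset_cst {G P A M : Type} [Group G] [Group P] [Group A] [AddCommGroup M] [Module ℂ M]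
    (g : G →* P) (hg : Function.Injective g) {n : ℕ} {ρ : Rp (P × A) M} {σ : Rp (G × A) M}
    (h : IsMor ρ σ (g.prodMap (MonoidHom.id A)) LinearMap.id) (u : H ρ n)
    (hu : Hmap n _ _ h u = 0) :
    Hmap n _ _ (cst_mor ((MulAction.toPermHom P (P ⧸ g.range)).comp (MonoidHom.fst P A)) ρ) u = 0 := by
  refine shapiro_cst _ (QuotientGroup.mk 1) (g.prodMap (MonoidHom.id A)) ?_ ?_ ?_ ?_ h u hu
  · rintro ⟨a, b⟩ ⟨c, d⟩ hab
    exact Prod.ext (hg (Prod.ext_iff.1 hab).1) (Prod.ext_iff.1 hab).2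
  · rintro ⟨x, a⟩
    change (QuotientGroup.mk (g x * 1) : P ⧸ g.range) = QuotientGroup.mk 1
    rw [QuotientGroup.eq]
    exact ⟨x⁻¹, by simp⟩
  · rintro ⟨x, a⟩ hx
    change (QuotientGroup.mk (x * 1) : P ⧸ g.range) = QuotientGroup.mk 1 at hx
    rw [QuotientGroup.eq] at hx
    obtain ⟨y, hy⟩ := hx
    refine ⟨(y⁻¹, a), Prod.ext ?_ rfl⟩
    change g y⁻¹ = x
    rw [map_inv, hy]; simp
  · intro y
    induction y using QuotientGroup.induction_on with
    | H p =>
      refine ⟨(p, 1), ?_⟩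
      change (QuotientGroup.mk (p * 1) : P ⧸ g.range) = QuotientGroup.mk p
      rw [mul_one]

theorem SP_amalg {G : Type} [Group G] (f : G →* Γ) (hsurj : Function.Surjective f) (p J : ℕ)
    (hf : SP f (p + 1) J) : ∃ (G' : Type) (_ : Group G') (f' : G' →* Γ),
      Function.Surjective f' ∧ SP f' (p + 2) J := by
  obtain ⟨C, _, j, hj, hZ⟩ := exists_ZP f.ker J
  obtain ⟨P, _, g, c, hg, hc, hij, hl, hgen⟩ := exists_amalg f.ker.subtype j
    (Subgroup.subtype_injective _) hj
  obtain ⟨f', hf'g, hf'c⟩ := hl Γ f 1 (fun n => n.2)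
  have hf'c : ∀ x, f' (c x) = 1 := hf'c
  have hθ0 : ∀ a b : P, (QuotientGroup.mk a : P ⧸ (g.comp f.ker.subtype).range) = QuotientGroup.mk b →
      f' a = f' b := by
    intro a b hab
    rw [QuotientGroup.eq] at hab
    obtain ⟨n, hn⟩ := hab
    have : f' (a⁻¹ * b) = 1 := by
      rw [← hn]
      exact (hf'g _).trans n.2
    rw [map_mul, map_inv] at this
    exact (inv_mul_eq_one.1 this)
  refine ⟨P, inferInstance, f', fun x => ?_, ?_⟩
  · obtain ⟨y, rfl⟩ := hsurj x
    exact ⟨g y, hf'g y⟩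
  refine SP_succ (f := f) (g := g) hf'g hf ?_ (amalgTree g c f.ker.subtype j hij hl hgen)
    (Quotient.lift (fun p : P => f' p) (fun a b hab => hθ0 a b (Quotient.sound hab))) ?_ ?_
  · intro A _ M _ _ ρ n hn v h1 h2 hv
    let r := f.prodMap (MonoidHom.id A)
    let i : f.ker × A →* G × A := f.ker.subtype.prodMap (MonoidHom.id A)
    have hσ : IsMor (ρ.comp r) ((ρ.comp (MonoidHom.inr Γ A)).comp (MonoidHom.snd f.ker A)) i
        LinearMap.id := by
      rintro ⟨x, a⟩ m
      change ρ (f x, a) m = ρ (1, a) m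
      rw [show f x = 1 from x.2]
    have hs : ∀ s, (aL Γ A).comp r (i s) 1 = 1 := by
      rintro ⟨x, a⟩
      change f x * 1 = 1
      rw [show f x = 1 from x.2, one_mul]
    refine shapiro ((aL Γ A).comp r) 1 i ?_ hs ?_ ?_ hσ _ ?_
    · rintro ⟨a, b⟩ ⟨c, d⟩ hab
      exact Prod.ext (Subtype.ext (Prod.ext_iff.1 hab).1) (Prod.ext_iff.1 hab).2
    · rintro ⟨x, a⟩ hx
      have hx : f x * 1 = 1 := hx
      rw [mul_one] at hx
      exact ⟨(⟨x, hx⟩, a), rfl⟩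
    · intro y
      obtain ⟨x, rfl⟩ := hsurj y
      exact ⟨(x, 1), mul_one (f x)⟩
    · have hC : IsMor ((funRep (aL Γ A) ρ).comp (f'.prodMap (MonoidHom.id A)))
          ((ρ.comp (MonoidHom.inr Γ A)).comp (MonoidHom.snd C A)) (c.prodMap (MonoidHom.id A))
          (ev 1 LinearMap.id) := by
        rintro ⟨x, a⟩ w
        change ρ (f' (c x), a) (w ((aL Γ A (f' (c x), a))⁻¹ 1)) = ρ (1, a) (w 1)
        rw [← map_inv, aL_apply, hf'c]; simp
      have hN : IsMor ((funRep (aL Γ A) ρ).comp (f'.prodMap (MonoidHom.id A)))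
          ((ρ.comp (MonoidHom.inr Γ A)).comp (MonoidHom.snd f.ker A))
          ((g.comp f.ker.subtype).prodMap (MonoidHom.id A)) (ev 1 LinearMap.id) := by
        rintro ⟨x, a⟩ w
        change ρ (f' (g x), a) (w ((aL Γ A (f' (g x), a))⁻¹ 1)) = ρ (1, a) (w 1)
        rw [← map_inv, aL_apply, hf'g, show f x = 1 from x.2]; simp
      refine (Hmap_tri n (ev_mor hs hσ) h2 hN (fun _ => rfl) (fun _ => rfl) v).trans ?_
      have hZ' := hZ A M (ρ.comp (MonoidHom.inr Γ A)) n hn (Hmap n _ _ hC v)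
      rw [Hmap_tri n (snd_mor _ j) hC hN (fun x => Prod.ext (hij x.1).symm rfl) (fun _ => rfl)] at hZ'
      rw [hZ']
      have hsnd : IsMor (ρ.comp (MonoidHom.inr Γ A)) ((ρ.comp (MonoidHom.inr Γ A)).comp
        (MonoidHom.snd f.ker A)) (MonoidHom.snd f.ker A) LinearMap.id := fun _ _ => rfl
      rw [Hmap_sq n (snd_mor _ 1) hC hsnd h1 (fun x => Prod.ext (map_one c) rfl) (fun _ => rfl), hv,
        map_zero]
  · intro k e
    induction e using QuotientGroup.induction_on with
    | H p => exact map_mul f' k p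
  · intro A _ M _ _ ρ n hn z hz
    refine cst_sum _ ((MulAction.toPermHom P (P ⧸ g.range)).comp (MonoidHom.fst P A))
      ((MulAction.toPermHom P (P ⧸ c.range)).comp (MonoidHom.fst P A)) (fun _ _ => rfl)
      (fun _ _ => rfl) _ ?_ ?_
    · refine coset_cst g hg (isMor_res _ _) _ ?_
      have hG := (hf A M ρ n hn z).2 hz
      have hm : IsMor ρ ((ρ.comp (f'.prodMap (MonoidHom.id A))).comp (g.prodMap (MonoidHom.id A)))
          (f.prodMap (MonoidHom.id A)) LinearMap.id := by
        rintro ⟨x, a⟩ m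
        change ρ (f x, a) m = ρ (f' (g x), a) m
        rw [hf'g]
      rw [Hmap_tri n _ _ hm (fun x => Prod.ext (hf'g x.1) rfl) (fun _ => rfl)]
      refine Hmap_zero_of n (f := MonoidHom.id _) (φ := LinearMap.id) ?_ _ hm (fun _ => rfl)
        (fun _ => rfl) z hG
      rintro ⟨x, a⟩ m
      change ρ (f x, a) m = ρ (f' (g x), a) m
      rw [hf'g]
    · refine coset_cst c hc (isMor_res _ _) _ ?_
      have hm : IsMor ρ ((ρ.comp (f'.prodMap (MonoidHom.id A))).comp (c.prodMap (MonoidHom.id A)))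
          ((1 : C →* Γ).prodMap (MonoidHom.id A)) LinearMap.id := by
        rintro ⟨x, a⟩ m
        change ρ (1, a) m = ρ (f' (c x), a) m
        rw [hf'c]
      rw [Hmap_tri n _ _ hm (fun x => Prod.ext (hf'c x.1) rfl) (fun _ => rfl)]
      exact Fil_res (y0 := 1) (fun s => mul_one (1 : Γ)) hm z hz

theorem exists_SP (Γ : Type) [Group Γ] (p J : ℕ) :
    ∃ (G : Type) (_ : Group G) (f : G →* Γ), SP f (p + 1) J := by
  have key : ∀ p, ∃ (G : Type) (_ : Group G) (f : G →* Γ), Function.Surjective f ∧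
      SP f (p + 2) J := by
    intro p
    induction p with
    | zero =>
      exact ⟨FreeGroup Γ, inferInstance, FreeGroup.lift id,
        fun x => ⟨FreeGroup.of x, FreeGroup.lift_apply_of⟩, SP_free Γ J⟩
    | succ p ih =>
      obtain ⟨G, _, f, hs, hf⟩ := ih
      exact SP_amalg f hs (p + 1) J hf
  cases p with
  | zero => exact ⟨Unit, inferInstance, 1, SP_one Γ J⟩
  | succ p =>
    obtain ⟨G, _, f, hs, hf⟩ := key p
    exact ⟨G, _, f, hf⟩

end SPex

section pairs

theorem quasi_inv {V W : Type} [AddCommGroup V] [Module ℂ V] [AddCommGroup W] [Module ℂ W]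
    (κ : V →ₗ[ℂ] W) : ∃ ν : W →ₗ[ℂ] V, ∀ v, κ (ν (κ v)) = κ v := by
  obtain ⟨s, hs⟩ := LinearMap.exists_rightInverse_of_surjective κ.rangeRestrict
    (LinearMap.range_rangeRestrict κ)
  obtain ⟨ν, hν⟩ := LinearMap.exists_extend s
  refine ⟨ν, fun v => ?_⟩
  have h1 : ν (κ v) = s (κ.rangeRestrict v) := LinearMap.congr_fun hν (κ.rangeRestrict v)
  rw [h1]
  exact congrArg Subtype.val (LinearMap.congr_fun hs (κ.rangeRestrict v))

def aR (Γ D : Type) [Group Γ] [Group D] : Γ × D →* Equiv.Perm D :=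
  (lm D).comp (MonoidHom.snd Γ D)

theorem aR_apply {Γ D : Type} [Group Γ] [Group D] (k : Γ × D) (x : D) :
    aR Γ D k x = k.2 * x := rfl

variable {G Γ D : Type} [Group G] [Group Γ] [Group D]

/-- the first factor acts trivially -/
def Tv {M : Type} [AddCommGroup M] [Module ℂ M] (σ : Rp (Γ × D) M) : Prop :=
  ∀ x m, σ (x, 1) m = m

section
variable {M : Type} [AddCommGroup M] [Module ℂ M] {σ : Rp (Γ × D) M}

theorem Tv.eq (h : Tv σ) (x d m) : σ (x, d) m = σ (1, d) m := by
  have : ((x, d) : Γ × D) = (1, d) * (x, 1) := by simp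
  rw [this, map_mul, Module.End.mul_apply, h]

theorem Tv.mulr (h : Tv σ) (x d e m) : σ (x, d) (σ (1, e) m) = σ (1, d * e) m := by
  rw [h.eq, ← Module.End.mul_apply, ← map_mul]; simp

theorem Tv.comp (h : Tv σ) (f : G →* Γ) : Tv (σ.comp (f.prodMap (MonoidHom.id D))) :=
  fun x m => h (f x) m

theorem Tv.fun (h : Tv σ) : Tv (funRep (aR Γ D) σ) := by
  intro x u
  funext d
  rw [funRep_apply, h, ← map_inv, aR_apply]; simp

theorem Tv.q (h : Tv σ) : Tv (QRep (aR Γ D) σ) := by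
  intro x q
  obtain ⟨u, rfl⟩ := qmk_surj q
  rw [QRep_qmk, h.fun]

theorem Tv.inl (h : Tv σ) : IsMor σ (1 : Rp Γ M) (MonoidHom.inl Γ D) LinearMap.id :=
  fun x m => h x m

def psR (σ : Rp (Γ × D) M) : M →ₗ[ℂ] (D → M) where
  toFun m := fun x => σ (1, x) m
  map_add' _ _ := by funext x; simp
  map_smul' _ _ := by funext x; simp

theorem psR_one (σ : Rp (Γ × D) M) (m) : psR σ m 1 = m := by
  change σ (1, 1) m = m
  rw [← Prod.one_eq_mk, map_one]; rfl

theorem Tv.psR (h : Tv σ) :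
    IsMor (1 : Rp Γ M) (funRep (aR Γ D) σ) (MonoidHom.fst Γ D) (psR σ) := by
  rintro ⟨x, d⟩ m
  funext e
  change σ (1, e) m = σ (x, d) (σ (1, (aR Γ D (x, d))⁻¹ e) m)
  rw [h.mulr, ← map_inv, aR_apply]
  simp

theorem stab_aR : ∀ s, aR Γ D (MonoidHom.inl Γ D s) 1 = 1 := fun s => mul_one (1 : D)

theorem Tv.ev (h : Tv σ) :
    IsMor (funRep (aR Γ D) σ) (1 : Rp Γ M) (MonoidHom.inl Γ D) (ev 1 LinearMap.id) :=
  ev_mor stab_aR h.inl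

theorem Tv.shap (h : Tv σ) {n : ℕ} (u : H (funRep (aR Γ D) σ) n)
    (hu : Hmap n _ _ h.ev u = 0) : u = 0 := by
  refine shapiro (aR Γ D) 1 (MonoidHom.inl Γ D) (fun a b hab => (Prod.ext_iff.1 hab).1) stab_aR ?_
    (fun y => ⟨(1, y), mul_one y⟩) h.inl u hu
  rintro ⟨x, d⟩ hx
  have hx : d * 1 = 1 := hx
  rw [mul_one] at hx
  exact ⟨x, Prod.ext rfl hx.symm⟩

theorem Tv.shap_cst (h : Tv σ) {n : ℕ} (u : H σ n)
    (hu : Hmap n _ _ h.inl u = 0) : Hmap n _ _ (cst_mor (aR Γ D) σ) u = 0 := by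
  apply h.shap
  rw [Hmap_tri n h.ev (cst_mor (aR Γ D) σ) h.inl (fun _ => rfl) (fun _ => rfl), hu]

theorem Tv.eq_psR (h : Tv σ) {n : ℕ} (u : H (funRep (aR Γ D) σ) n) :
    u = Hmap n _ _ h.psR (Hmap n _ _ h.ev u) := by
  rw [← sub_eq_zero]
  apply h.shap
  rw [map_sub, sub_eq_zero, Hmap_comp n h.ev h.psR]
  symm
  apply Hmap_id'
  · rfl
  · apply LinearMap.ext; intro m
    exact psR_one σ m

end

theorem part_two (f : G →* Γ) {a J : ℕ} (hf : SP f (a + 1) J) (b : ℕ) :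
    ∀ (j : ℕ) (M : Type) [AddCommGroup M] [Module ℂ M] (σ : Rp (Γ × D) M), Tv σ → j ≤ J →
      ∀ y : H σ j, Fil (aR Γ D) b j σ y → j ≤ a + b →
        Hmap j _ _ (isMor_res σ (f.prodMap (MonoidHom.id D))) y = 0 → y = 0 := by
  induction b with
  | zero =>
    intro j M _ _ σ hσ hj y _ hja h0
    exact Fil_big _ _ _ (by omega) _ _ ((hf D M σ j hj y).1 h0)
  | succ b ih =>
    intro j M _ _ σ hσ hj y hy hja h0
    cases j with
    | zero => exact hy
    | succ j =>
      obtain ⟨z, hz, rfl⟩ := hy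
      set r := f.prodMap (MonoidHom.id D) with hr
      let S := cSES (aR Γ D) σ
      have h' : (S.res r).δ j (Hmap j _ _ (isMor_res (QRep (aR Γ D) σ) r) z) = 0 := by
        rw [← h0]; exact (S.δ_res r j z).symm
      obtain ⟨u, hu⟩ := (S.res r).L2 j _ h'
      have hσr : Tv (σ.comp r) := hσ.comp f
      have hps : ∀ m, psR (σ.comp r) m = psR σ m := by
        intro m
        funext d
        change σ (f 1, d) m = σ (1, d) m
        rw [map_one]
      let u' : H (funRep (aR G D) (σ.comp r)) j := u
      let m := Hmap j _ _ hσr.ev u'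
      have hum : u' = Hmap j _ _ hσr.psR m := hσr.eq_psR u'
      obtain ⟨μ, hμ⟩ := quasi_inv ((qmk D M).comp (psR σ))
      let t := Hmap j _ _ hσ.q.inl z
      have k1 : IsMor (1 : Rp Γ (QM D M)) (funRep (aR Γ D) σ) (MonoidHom.fst Γ D)
          ((psR σ).comp μ) := fun k q => hσ.psR k (μ q)
      have k2 : IsMor (1 : Rp Γ (QM D M)) (QRep (aR Γ D) σ) (MonoidHom.fst Γ D)
          ((qmk D M).comp ((psR σ).comp μ)) := fun k q =>
            congrArg (qmk D M) (k1 k q)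
      let z' := z - Hmap j _ _ k2 t
      have hδ : S.δ j z' = S.δ j z := by
        have : Hmap j _ _ k2 t = Hmap j _ _ S.hπ (Hmap j _ _ k1 t) :=
          (Hmap_tri j S.hπ k1 k2 (fun _ => rfl) (fun _ => rfl) t).symm
        rw [map_sub, this, SES.L3, sub_zero]
      have hFil : Fil (aR Γ D) b j _ z' := by
        cases b with
        | zero => trivial
        | succ b =>
          have : t = 0 := Fil_res (y0 := 1) stab_aR hσ.q.inl z hz
          have : z' = z := by
            simp only [z']
            rw [this, map_zero, sub_zero]
          rw [this]; exact hz
      have hz0 : z' = 0 := by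
        refine ih j _ _ hσ.q (by omega) z' hFil (by omega) ?_
        have k3 : IsMor (1 : Rp G M) ((QRep (aR Γ D) σ).comp r) (MonoidHom.fst G D)
            ((qmk D M).comp (psR σ)) := fun k q => congrArg (qmk D M) (hσ.psR (r k) q)
        have e1 : Hmap j _ _ (isMor_res (QRep (aR Γ D) σ) r) z = Hmap j _ _ k3 m := by
          rw [← hu]
          change Hmap j _ _ (S.res r).hπ u' = _
          rw [hum]
          exact Hmap_tri j (S.res r).hπ hσr.psR k3 (fun _ => rfl)
            (fun m => congrArg (qmk D M) (hps m)) m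
        have k4 : IsMor ((QRep (aR Γ D) σ).comp r) (1 : Rp G (QM D M)) (MonoidHom.inl G D)
            LinearMap.id := fun x m => hσ.q (f x) m
        have k5 : IsMor (1 : Rp Γ (QM D M)) (1 : Rp G (QM D M)) f LinearMap.id := fun _ _ => rfl
        have k6 : IsMor (1 : Rp G M) (1 : Rp G (QM D M)) (MonoidHom.id G)
            ((qmk D M).comp (psR σ)) := fun _ _ => rfl
        have e2 : Hmap j _ _ k5 t = Hmap j _ _ k6 m := by
          rw [Hmap_sq j k5 hσ.q.inl k4 (isMor_res (QRep (aR Γ D) σ) r) 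
            (fun x => Prod.ext rfl rfl) (fun _ => rfl), e1]
          exact Hmap_tri j k4 k3 k6 (fun _ => rfl) (fun _ => rfl) m
        have k7 : IsMor (1 : Rp G (QM D M)) ((QRep (aR Γ D) σ).comp r) (MonoidHom.fst G D)
          ((qmk D M).comp ((psR σ).comp μ)) := fun k q => k3 k (μ q)
        rw [map_sub, sub_eq_zero, Hmap_sq j (isMor_res (QRep (aR Γ D) σ) r) k2 k7 k5
          (fun _ => rfl) (fun _ => rfl), e1, e2]
        exact (Hmap_tri j k7 k6 k3 (fun _ => rfl) hμ m).symm
      change S.δ j z = 0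
      rw [← hδ, hz0, map_zero]

theorem part_one (f : G →* Γ) {p J : ℕ} (hf : SP f p J) (q : ℕ) :
    ∀ (n : ℕ) (M : Type) [AddCommGroup M] [Module ℂ M] (σ : Rp (Γ × D) M), Tv σ → n ≤ J →
      p + q ≤ n + 1 → ∀ x : H σ n, ∃ x0 x1, x = x0 + x1 ∧
        Hmap n _ _ (isMor_res σ (f.prodMap (MonoidHom.id D))) x0 = 0 ∧
        Fil (aR Γ D) q n σ x1 := by
  induction q with
  | zero =>
    intro n M _ _ σ hσ hn _ x
    exact ⟨0, x, (zero_add x).symm, map_zero _, trivial⟩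
  | succ q ih =>
    intro n M _ _ σ hσ hn hpq x
    let t := Hmap n _ _ hσ.inl x
    have c1 : IsMor (1 : Rp Γ M) (1 : Rp Γ (D → M)) (MonoidHom.id Γ) (cst D M) := fun _ _ => rfl
    have c2 : IsMor (1 : Rp Γ M) (1 : Rp Γ (D → M)) (MonoidHom.id Γ) (psR σ) := fun _ _ => rfl
    have e1 : Hmap n _ _ c2 t = Hmap n _ _ c1 t := by
      have h := hσ.eq_psR (Hmap n _ _ (cst_mor (aR Γ D) σ) x)
      rw [Hmap_tri n hσ.ev (cst_mor (aR Γ D) σ) hσ.inl (fun _ => rfl) (fun _ => rfl)] at h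
      have h := congrArg (Hmap n _ _ hσ.fun.inl) h
      rw [Hmap_tri n hσ.fun.inl hσ.psR c2 (fun _ => rfl) (fun _ => rfl)] at h
      refine h.symm.trans ?_
      exact Hmap_sq n c1 hσ.inl hσ.fun.inl (cst_mor (aR Γ D) σ) (fun _ => rfl) (fun _ => rfl) x |>.symm
    obtain ⟨ν, hν⟩ := quasi_inv (psR σ - cst D M)
    let lam : M →ₗ[ℂ] M := LinearMap.id - ν.comp (psR σ - cst D M)
    have hlam : ∀ d m, σ (1, d) (lam m) = lam m := by
      intro d m
      have : (psR σ - cst D M) (lam m) = 0 := by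
        change (psR σ - cst D M) (m - ν ((psR σ - cst D M) m)) = 0
        rw [map_sub, hν, sub_self]
      exact sub_eq_zero.1 (congrFun this d)
    have c3 : IsMor (1 : Rp Γ M) σ (MonoidHom.fst Γ D) lam := by
      rintro ⟨x, d⟩ m
      rw [hσ.eq, hlam]; rfl
    have c4 : IsMor (1 : Rp Γ M) (1 : Rp Γ (D → M)) (MonoidHom.id Γ) (psR σ - cst D M) :=
      fun _ _ => rfl
    have c5 : IsMor (1 : Rp Γ M) (1 : Rp Γ M) (MonoidHom.id Γ) (ν.comp (psR σ - cst D M)) :=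
      fun _ _ => rfl
    have c6 : IsMor (1 : Rp Γ M) (1 : Rp Γ M) (MonoidHom.id Γ) lam := fun _ _ => rfl
    have e2 : Hmap n _ _ c4 t = 0 := by
      rw [Hmap_sub_coef n c2 c1, e1, sub_self]
    have e3 : Hmap n _ _ c5 t = 0 := by
      have c7 : IsMor (1 : Rp Γ (D → M)) (1 : Rp Γ M) (MonoidHom.id Γ) ν := fun _ _ => rfl
      exact Hmap_zero_of n c7 c4 c5 (fun _ => rfl) (fun _ => rfl) t e2
    have e4 : Hmap n _ _ c6 t = t := by
      rw [Hmap_sub_coef n (id_mor _) c5, e3, sub_zero]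
      exact Hmap_id' n _ rfl rfl t
    let x0 := Hmap n _ _ c3 t
    have hx0 : Hmap n _ _ (isMor_res σ (f.prodMap (MonoidHom.id D))) x0 = 0 := by
      rw [hf D M σ n hn]
      exact Fil_nat (a := aL Γ D) (a' := lm Γ) (j := id) (fun _ _ => rfl) p n c3 t
        (Fil_all p n (by omega) _ t)
    have hx : Hmap n _ _ (cst_mor (aR Γ D) σ) (x - x0) = 0 := by
      apply hσ.shap_cst
      rw [map_sub, Hmap_tri n hσ.inl c3 c6 (fun _ => rfl) (fun _ => rfl), e4, sub_self]
    cases n with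
    | zero =>
      have := (cSES (aR Γ D) σ).L0 _ hx
      exact ⟨x0, 0, by rw [add_zero]; exact sub_eq_zero.1 this, hx0, Fil_zero _ _ _ _⟩
    | succ n =>
      obtain ⟨x', hx'⟩ := (cSES (aR Γ D) σ).L1 n _ hx
      obtain ⟨y0, y1, rfl, hy0, hy1⟩ := ih n _ _ hσ.q (by omega) (by omega) x'
      refine ⟨x0 + (cSES (aR Γ D) σ).δ n y0, (cSES (aR Γ D) σ).δ n y1, ?_, ?_, y1, hy1, rfl⟩
      · rw [map_add] at hx'
        rw [add_assoc, hx']; abel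
      · rw [map_add, hx0, zero_add]
        refine ((cSES (aR Γ D) σ).δ_res (f.prodMap (MonoidHom.id D)) n y0).trans ?_
        exact (congrArg _ hy0).trans (map_zero _)

theorem SP_right (f : G →* D) {q J : ℕ} (hf : SP f q J) {M : Type} [AddCommGroup M] [Module ℂ M]
    (σ : Rp (Γ × D) M) {n : ℕ} (hn : n ≤ J) (y : H σ n) :
    Hmap n _ _ (isMor_res σ ((MonoidHom.id Γ).prodMap f)) y = 0 ↔ Fil (aR Γ D) q n σ y := by
  let sw : D × Γ →* Γ × D := (MonoidHom.snd D Γ).prod (MonoidHom.fst D Γ)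
  let sw' : Γ × D →* D × Γ := (MonoidHom.snd Γ D).prod (MonoidHom.fst Γ D)
  let s0 : G × Γ →* Γ × G := (MonoidHom.snd G Γ).prod (MonoidHom.fst G Γ)
  let s0' : Γ × G →* G × Γ := (MonoidHom.snd Γ G).prod (MonoidHom.fst Γ G)
  have b1 : IsMor (σ.comp sw) σ sw' LinearMap.id := fun _ _ => rfl
  have b2 : Hmap n _ _ b1 (Hmap n _ _ (isMor_res σ sw) y) = y := by
    rw [Hmap_comp]
    exact Hmap_id' n _ rfl rfl y
  have h := hf Γ M (σ.comp sw) n hn (Hmap n _ _ (isMor_res σ sw) y)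
  constructor
  · intro h0
    rw [← b2]
    refine Fil_nat (a := aR Γ D) (a' := aL D Γ) (j := id) (fun _ _ => rfl) q n b1 _ ?_
    rw [← h]
    have b3 : IsMor (σ.comp ((MonoidHom.id Γ).prodMap f))
      ((σ.comp sw).comp (f.prodMap (MonoidHom.id Γ))) s0 LinearMap.id := fun _ _ => rfl
    rw [Hmap_sq n (isMor_res (σ.comp sw) (f.prodMap (MonoidHom.id Γ))) (isMor_res σ sw) b3
      (isMor_res σ ((MonoidHom.id Γ).prodMap f)) (fun _ => rfl) (fun _ => rfl), h0, map_zero]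
  · intro h0
    have h1 := h.2 (Fil_nat (a := aL D Γ) (a' := aR Γ D) (j := id) (fun _ _ => rfl) q n
      (isMor_res σ sw) y h0)
    have b4 : IsMor ((σ.comp sw).comp (f.prodMap (MonoidHom.id Γ)))
      (σ.comp ((MonoidHom.id Γ).prodMap f)) s0' LinearMap.id := fun _ _ => rfl
    have b5 : IsMor σ ((σ.comp sw).comp (f.prodMap (MonoidHom.id Γ)))
      (sw.comp (f.prodMap (MonoidHom.id Γ))) LinearMap.id := fun _ _ => rfl
    rw [Hmap_tri n (isMor_res (σ.comp sw) (f.prodMap (MonoidHom.id Γ))) (isMor_res σ sw) b5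
      (fun _ => rfl) (fun _ => rfl)] at h1
    exact Hmap_zero_of n b4 b5 _ (fun _ => rfl) (fun _ => rfl) y h1

end pairs

section compare

variable {G G' : Type} [Group G] [Group G']

def Phi (G : Type) [Group G] (n : ℕ) : ((Fin n → G) → ℂ) →ₗ[ℂ] ((Fin (n + 1) → G) → ℂ) where
  toFun c := fun x => c (fun i => (x i.castSucc)⁻¹ * x i.succ)
  map_add' _ _ := rfl
  map_smul' _ _ := rfl

theorem Phi_apply (n : ℕ) (c : (Fin n → G) → ℂ) (x) :
    Phi G n c x = c (fun i => (x i.castSucc)⁻¹ * x i.succ) := rfl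

theorem Phi_dd (n : ℕ) (c : (Fin n → G) → ℂ) : Phi G (n + 1) (gcD G n c) = dd (n + 1) (Phi G n c) := by
  funext x
  rw [Phi_apply, dd_apply, Fin.sum_univ_succ, Fin.sum_univ_castSucc, ← add_assoc]
  simp only [gcD, LinearMap.coe_mk, AddHom.coe_mk, Finset.sum_range]
  congr 1
  · congr 1
    · simp [Phi_apply]
    · refine Finset.sum_congr rfl fun k _ => ?_
      rw [Phi_apply, zsmul_eq_mul]
      push_cast
      congr 1
      congr 1
      funext j
      have e1 : (k : ℕ) % (n + 1) = k := Nat.mod_eq_of_lt (by omega)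
      have e2 : ((k : ℕ) + 1) % (n + 1) = k + 1 := Nat.mod_eq_of_lt (by omega)
      rcases lt_trichotomy (j : ℕ) (k : ℕ) with h | h | h
      · have a1 : k.castSucc.succ.succAbove j.castSucc = j.castSucc.castSucc := by
          rw [Fin.succAbove_of_castSucc_lt]; simp [Fin.lt_def]; omega
        have a2 : k.castSucc.succ.succAbove j.succ = j.castSucc.succ := by
          rw [Fin.succAbove_of_castSucc_lt]
          · rfl
          · change (j : ℕ) + 1 < (k : ℕ) + 1; omega
        rw [if_pos h, a1, a2]
      · have a1 : k.castSucc.succ.succAbove j.castSucc = j.castSucc.castSucc := by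
          rw [Fin.succAbove_of_castSucc_lt]; simp [Fin.lt_def]; omega
        have a2 : k.castSucc.succ.succAbove j.succ = j.succ.succ := by
          refine Fin.succAbove_of_le_castSucc _ _ ?_
          change (k : ℕ) + 1 ≤ (j : ℕ) + 1; omega
        have b1 : (⟨(k : ℕ) % (n + 1), Nat.mod_lt _ (Nat.succ_pos n)⟩ : Fin (n + 1)) = j.castSucc :=
          Fin.ext (by simp [e1, h])
        have b2 : (⟨((k : ℕ) + 1) % (n + 1), Nat.mod_lt _ (Nat.succ_pos n)⟩ : Fin (n + 1)) = j.succ :=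
          Fin.ext (by simp [e2, h])
        rw [if_neg (by omega), if_pos h, a1, a2, b1, b2, ← Fin.succ_castSucc]
        group
      · have a1 : k.castSucc.succ.succAbove j.castSucc = j.succ.castSucc := by
          rw [Fin.succAbove_of_le_castSucc]
          · rfl
          · simp [Fin.le_def]; omega
        have a2 : k.castSucc.succ.succAbove j.succ = j.succ.succ := by
          refine Fin.succAbove_of_le_castSucc _ _ ?_
          change (k : ℕ) + 1 ≤ (j : ℕ) + 1; omega
        rw [if_neg (by omega), if_neg (by omega), a1, a2]
  · rw [Phi_apply, zsmul_eq_mul]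
    push_cast
    congr 1
    congr 1
    funext j
    simp

theorem Phi_Coch (n : ℕ) (c : (Fin n → G) → ℂ) : Phi G n c ∈ Coch (1 : Rp G ℂ) n := by
  intro g x
  change Phi G n c _ = Phi G n c x
  rw [Phi_apply, Phi_apply]
  congr 1
  funext i
  group

theorem Phi_inj (n : ℕ) : Function.Injective (Phi G n) := by
  intro c c' h
  funext v
  have := congrFun h (Fin.partialProd v)
  rw [Phi_apply, Phi_apply] at this
  simpa [Fin.partialProd_right_inv] using this

theorem Phi_surj (n : ℕ) {b} (hb : b ∈ Coch (1 : Rp G ℂ) n) : ∃ c, Phi G n c = b := by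
  refine ⟨fun v => b (Fin.partialProd v), ?_⟩
  funext x
  rw [Phi_apply]
  have h1 := hb (x 0) (Fin.partialProd fun i => (x i.castSucc)⁻¹ * x i.succ)
  have h2 := Fin.partialProd_left_inv x
  have h3 : (fun i => x 0 * Fin.partialProd (fun i => (x i.castSucc)⁻¹ * x i.succ) i) = x := h2
  rw [h3] at h1
  exact h1.symm

theorem Phi_Z (n : ℕ) {c : (Fin n → G) → ℂ} (hc : c ∈ gcZ G n) : Phi G n c ∈ Z (1 : Rp G ℂ) n := by
  refine mem_Z.2 ⟨Phi_Coch n c, ?_⟩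
  rw [← Phi_dd, show gcD G n c = 0 from hc, map_zero]

theorem Phi_B (n : ℕ) {c : (Fin n → G) → ℂ} : Phi G n c ∈ B (1 : Rp G ℂ) n ↔ c ∈ gcB G n := by
  cases n with
  | zero =>
    rw [mem_B_zero]
    change _ ↔ c ∈ (⊥ : Submodule ℂ _)
    rw [Submodule.mem_bot]
    exact ⟨fun h => Phi_inj 0 (h.trans (map_zero _).symm), fun h => by rw [h, map_zero]⟩
  | succ n =>
    rw [mem_B_succ]
    change _ ↔ c ∈ LinearMap.range (gcD G n)
    constructor
    · rintro ⟨b, hb, e⟩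
      obtain ⟨b', rfl⟩ := Phi_surj n hb
      exact ⟨b', Phi_inj _ (by rw [Phi_dd, e])⟩
    · rintro ⟨b, rfl⟩
      exact ⟨_, Phi_Coch n b, (Phi_dd n b).symm⟩

noncomputable def cmp (G : Type) [Group G] (n : ℕ) : gcH G n →ₗ[ℂ] H (1 : Rp G ℂ) n :=
  Submodule.mapQ _ _ ((Phi G n).restrict (fun _ hc => Phi_Z n hc)) (fun _ hc => (Phi_B n).2 hc)

theorem cmp_eq_zero (n : ℕ) (x : gcH G n) (h : cmp G n x = 0) : x = 0 := by
  obtain ⟨⟨c, hc⟩, rfl⟩ := Submodule.Quotient.mk_surjective _ x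
  have h : mk (1 : Rp G ℂ) n (Phi G n c) (Phi_Z n hc) = 0 := h
  rw [mk_eq_zero, Phi_B] at h
  rw [Submodule.Quotient.mk_eq_zero]
  exact h

theorem one_mor (f : G →* G') : IsMor (1 : Rp G' ℂ) (1 : Rp G ℂ) f LinearMap.id := fun _ _ => rfl

theorem cmp_nat (n : ℕ) (f : G →* G') (x : gcH G' n) :
    cmp G n (gcHmap f n x) = Hmap n _ _ (one_mor f) (cmp G' n x) := by
  obtain ⟨⟨c, hc⟩, rfl⟩ := Submodule.Quotient.mk_surjective _ x
  change mk (1 : Rp G ℂ) n (Phi G n (gcRes f n c)) (Phi_Z n (gcRes_mem_ker f n hc)) =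
    Hmap n _ _ (one_mor f) (mk (1 : Rp G' ℂ) n (Phi G' n c) (Phi_Z n hc))
  rw [Hmap_mk]
  apply mk_congr
  funext x
  change c _ = c _
  congr 1
  funext i
  change f _ = (f _)⁻¹ * f _
  rw [map_mul, map_inv]

end compare

theorem main (n r : ℕ) (hr : r < n)
    (φ : ∀ (Γ₀ Γ₁ : Type) [Group Γ₀] [Group Γ₁],
      gcH (Γ₀ × Γ₁) n →ₗ[ℂ] gcH (Γ₀ × Γ₁) r)
    (hnat : ∀ (Γ₀ Γ₁ Γ₀' Γ₁' : Type) [Group Γ₀] [Group Γ₁] [Group Γ₀'] [Group Γ₁']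
      (f₀ : Γ₀ →* Γ₀') (f₁ : Γ₁ →* Γ₁'),
      (gcHmap (f₀.prodMap f₁) r).comp (φ Γ₀' Γ₁')
        = (φ Γ₀ Γ₁).comp (gcHmap (f₀.prodMap f₁) n)) :
    ∀ (Γ₀ Γ₁ : Type) [Group Γ₀] [Group Γ₁], φ Γ₀ Γ₁ = 0 := by
  intro Γ₀ Γ₁ _ _
  apply LinearMap.ext
  intro x
  change φ Γ₀ Γ₁ x = 0
  apply cmp_eq_zero
  by_contra hne
  set y := cmp (Γ₀ × Γ₁) r (φ Γ₀ Γ₁ x) with hy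
  have hex : ∃ b, ¬ Fil (aR Γ₀ Γ₁) (b + 1) r _ y :=
    ⟨r, fun h => hne (Fil_big _ _ _ (by omega) _ _ h)⟩
  classical
  obtain ⟨b, hb1, hb2⟩ : ∃ b, ¬ Fil (aR Γ₀ Γ₁) (b + 1) r _ y ∧ Fil (aR Γ₀ Γ₁) b r _ y := by
    refine ⟨Nat.find hex, Nat.find_spec hex, ?_⟩
    cases h : Nat.find hex with
    | zero => trivial
    | succ b =>
      have := Nat.find_min hex (m := b) (by omega)
      exact not_not.1 this
  have hbr : b ≤ r := by
    by_contra h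
    exact hne (Fil_big _ _ _ (by omega) _ _ hb2)
  obtain ⟨G₁, _, f₁, hf₁⟩ := exists_SP Γ₁ b n
  obtain ⟨G₀, _, f₀, hf₀⟩ := exists_SP Γ₀ (r - b) n
  -- the class restricts trivially
  have hx : gcHmap (f₀.prodMap f₁) n x = 0 := by
    apply cmp_eq_zero
    rw [cmp_nat]
    obtain ⟨x0, x1, e, h0, h1⟩ := part_one (D := Γ₁) f₀ hf₀ (b + 1) n ℂ
      (1 : Rp (Γ₀ × Γ₁) ℂ) (fun _ _ => rfl) le_rfl (by omega) (cmp (Γ₀ × Γ₁) n x)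
    rw [← SP_right f₁ hf₁ _ le_rfl] at h1
    rw [e, map_add]
    have m0 : IsMor ((1 : Rp (Γ₀ × Γ₁) ℂ).comp (f₀.prodMap (MonoidHom.id Γ₁)))
      (1 : Rp (G₀ × G₁) ℂ) ((MonoidHom.id G₀).prodMap f₁) LinearMap.id := fun _ _ => rfl
    have m1 : IsMor ((1 : Rp (Γ₀ × Γ₁) ℂ).comp ((MonoidHom.id Γ₀).prodMap f₁))
      (1 : Rp (G₀ × G₁) ℂ) (f₀.prodMap (MonoidHom.id G₁)) LinearMap.id := fun _ _ => rfl
    rw [Hmap_zero_of n m0 _ (one_mor (f₀.prodMap f₁)) (fun _ => rfl) (fun _ => rfl) x0 h0,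
      Hmap_zero_of n m1 _ (one_mor (f₀.prodMap f₁)) (fun _ => rfl) (fun _ => rfl) x1 h1, add_zero]
  have hy0 : Hmap r _ _ (one_mor (f₀.prodMap f₁)) y = 0 := by
    rw [hy, ← cmp_nat]
    have := LinearMap.congr_fun (hnat _ _ _ _ f₀ f₁) x
    simp only [LinearMap.comp_apply] at this
    rw [this, hx, map_zero, map_zero]
  rw [← SP_right f₁ hf₁ _ (by omega)] at hb1
  apply hb1
  have hT : Tv ((1 : Rp (Γ₀ × Γ₁) ℂ).comp ((MonoidHom.id Γ₀).prodMap f₁)) := fun _ _ => rfl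
  refine part_two (D := G₁) f₀ hf₀ b r ℂ _ hT (by omega) _ ?_ (by omega) ?_
  · exact Fil_nat (f := (MonoidHom.id Γ₀).prodMap f₁) (a := aR Γ₀ G₁) (a' := aR Γ₀ Γ₁) (j := f₁) (fun k z => map_mul f₁ k.2 z) b r
      (isMor_res _ _) y hb2
  · refine (Hmap_comp r _ _ y).trans ?_
    exact hy0

end KT

/-- let `n > r ≥ 0`.  Any family of ℂ-linear maps
`φ_{Γ₀,Γ₁} : H^n(Γ₀ × Γ₁; ℂ) → H^r(Γ₀ × Γ₁; ℂ)`, natural in the pair of groups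
`(Γ₀, Γ₁)` (with respect to pullback along `f₀ × f₁` for all group homomorphisms
`f₀, f₁`), vanishes identically. -/
theorem stmt_1 (n r : ℕ) (hr : r < n)
    (φ : ∀ (Γ₀ Γ₁ : Type) [Group Γ₀] [Group Γ₁],
      gcH (Γ₀ × Γ₁) n →ₗ[ℂ] gcH (Γ₀ × Γ₁) r)
    (hnat : ∀ (Γ₀ Γ₁ Γ₀' Γ₁' : Type) [Group Γ₀] [Group Γ₁] [Group Γ₀'] [Group Γ₁']
      (f₀ : Γ₀ →* Γ₀') (f₁ : Γ₁ →* Γ₁'),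
      (gcHmap (f₀.prodMap f₁) r).comp (φ Γ₀' Γ₁')
        = (φ Γ₀ Γ₁).comp (gcHmap (f₀.prodMap f₁) n)) :
    ∀ (Γ₀ Γ₁ : Type) [Group Γ₀] [Group Γ₁], φ Γ₀ Γ₁ = 0 := by
  exact KT.main n r hr φ hnat
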